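/- arXiv:2305.15807 — 2 statements merged into one kernel-verified Lean document; each statement's English description precedes it below -/
import Mathlib

section
/- (Lemma 1 of the paper.) In the online CBwK protocol with Assumption (EST), fix δ ∈ (0,1) and 0 < b < min B, and suppose the problem (r,c,B',ν) is feasible for some B' < B − b·1. Run the Box B strategy with step size γ > 0, confidence parameter δ/4, and margin b. Then with probability at least 1−δ, for all 1 ≤ t ≤ T: ‖ ( Σ_{τ=1}^t c_τ − t(B − b·1) )₊ ‖ ≤ (1 + 3‖λ*_{B−b·1}‖)/γ + 20 √d · Υ_{T,δ}, where λ*_{B−b·1} is a minimizer of λ ↦ E_{X∼ν}[max_{a∈A}{ r(X,a) − ⟨c(X,a) − (B−b·1), λ⟩ }] over λ ∈ [0,∞)^d, (·)₊ is the componentwise positive part, and ‖·‖ the Euclidean norm. -/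
open MeasureTheory ProbabilityTheory Finset

namespace CBwK

variable {X : Type*} [MeasurableSpace X] {A : Type*} [Fintype A] [Nonempty A]
  [MeasurableSpace A] {d : ℕ} {Ω : Type*} [MeasurableSpace Ω]

/-- A static policy: a measurable map `X → P(A)` with components `(π_a)_{a∈A}`. -/
def IsPolicy (π : X → A → ℝ) : Prop :=
  (∀ x a, 0 ≤ π x a) ∧ (∀ x, ∑ a, π x a = 1) ∧ (∀ a, Measurable fun x => π x a)

/-- Expected reward `E_{X∼ν}[Σ_a r(X,a) π_a(X)]` of a policy. -/
noncomputable def polReward (ν : Measure X) (r : X → A → ℝ) (π : X → A → ℝ) : ℝ :=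
  ∫ x, ∑ a, r x a * π x a ∂ν

/-- Component `i` of the expected cost vector of a policy. -/
noncomputable def polCost (ν : Measure X) (c : X → A → Fin d → ℝ) (π : X → A → ℝ)
    (i : Fin d) : ℝ :=
  ∫ x, ∑ a, c x a i * π x a ∂ν

/-- The problem `(r,c,B',ν)` is feasible. -/
def Feasible (ν : Measure X) (c : X → A → Fin d → ℝ) (B' : Fin d → ℝ) : Prop :=
  ∃ π, IsPolicy π ∧ ∀ i, polCost ν c π i ≤ B' i

/-- `OPT(r,c,B')`: optimal expected reward under the expected-cost constraints `B'`. -/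
noncomputable def OPT (ν : Measure X) (r : X → A → ℝ) (c : X → A → Fin d → ℝ)
    (B' : Fin d → ℝ) : ℝ :=
  sSup {y : ℝ | ∃ π, IsPolicy π ∧ (∀ i, polCost ν c π i ≤ B' i) ∧ y = polReward ν r π}

/-- `L(λ,C) = E_{X∼ν}[ max_a { r(X,a) − ⟨c(X,a) − C, λ⟩ } ]`. -/
noncomputable def L (ν : Measure X) (r : X → A → ℝ) (c : X → A → Fin d → ℝ)
    (lam : Fin d → ℝ) (C : Fin d → ℝ) : ℝ :=
  ∫ x, Finset.univ.sup' Finset.univ_nonempty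
    (fun a => r x a - ∑ i, (c x a i - C i) * lam i) ∂ν

/-- Euclidean norm on `ℝ^d`. -/
noncomputable def enorm (v : Fin d → ℝ) : ℝ := Real.sqrt (∑ i, (v i) ^ 2)

/-- Smallest component of a vector of `ℝ^d` (junk value `0` if `d = 0`). -/
noncomputable def minComp (v : Fin d → ℝ) : ℝ := ⨅ i, v i

/-- The online CBwK protocol over `T` rounds (contexts i.i.d. `ν`; rewards and costs with
conditional expectations `r(x_t,a_t)` and `c(x_t,a_t)` given the past, `x_t` and `a_t`),
together with the estimation procedure of Assumption (EST). -/
structure Protocol (ν : Measure X) (r : X → A → ℝ) (c : X → A → Fin d → ℝ) (T : ℕ)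
    (P : Measure Ω) where
  /-- contexts -/
  x : ℕ → Ω → X
  /-- actions picked by the learner -/
  act : ℕ → Ω → A
  /-- rewards obtained -/
  rew : ℕ → Ω → ℝ
  /-- cost vectors suffered -/
  cost : ℕ → Ω → Fin d → ℝ
  /-- filtration of the information available after each round -/
  F : Filtration ℕ (inferInstance : MeasurableSpace Ω)
  rew_mem : ∀ t ω, rew t ω ∈ Set.Icc (0 : ℝ) 1
  cost_mem : ∀ t ω i, cost t ω i ∈ Set.Icc (-1 : ℝ) 1
  x_adapted : ∀ t, Measurable[F t] (x t)
  act_adapted : ∀ t, Measurable[F t] (act t)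
  rew_adapted : ∀ t, Measurable[F t] (rew t)
  cost_adapted : ∀ t i, Measurable[F t] fun ω => cost t ω i
  /-- the context of round `t` is distributed according to `ν` … -/
  x_law : ∀ t, 1 ≤ t → t ≤ T → P.map (x t) = ν
  /-- … independently of the past -/
  x_indep : ∀ t, 1 ≤ t → t ≤ T →
    Indep (MeasurableSpace.comap (x t) inferInstance) (F (t - 1)) P
  /-- the conditional expectation of `r_t` given the past, `x_t` and `a_t` is `r(x_t,a_t)` -/
  rew_condExp : ∀ t, 1 ≤ t → t ≤ T →
    P[rew t | (F (t - 1) : MeasurableSpace Ω)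
        ⊔ MeasurableSpace.comap (x t) inferInstance
        ⊔ MeasurableSpace.comap (act t) inferInstance]
      =ᵐ[P] fun ω => r (x t ω) (act t ω)
  /-- the conditional expectation of `c_t` given the past, `x_t` and `a_t` is `c(x_t,a_t)` -/
  cost_condExp : ∀ t, 1 ≤ t → t ≤ T → ∀ i,
    P[fun ω => cost t ω i | (F (t - 1) : MeasurableSpace Ω)
        ⊔ MeasurableSpace.comap (x t) inferInstance
        ⊔ MeasurableSpace.comap (act t) inferInstance]
      =ᵐ[P] fun ω => c (x t ω) (act t ω) i
  /-- estimates of the reward function, built on the data of the first `t` rounds -/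
  rhat : ℕ → Ω → X → A → ℝ
  /-- estimates of the cost function, built on the data of the first `t` rounds -/
  chat : ℕ → Ω → X → A → Fin d → ℝ
  /-- known error functions (the last argument is the confidence parameter `δ`) -/
  eps : ℕ → Ω → X → A → ℝ → ℝ
  rhat_mem : ∀ t ω x' a', rhat t ω x' a' ∈ Set.Icc (0 : ℝ) 1
  chat_mem : ∀ t ω x' a' i, chat t ω x' a' i ∈ Set.Icc (-1 : ℝ) 1
  eps_mem : ∀ t ω x' a' δ', eps t ω x' a' δ' ∈ Set.Icc (0 : ℝ) 1
  rhat_adapted : ∀ t x' a', Measurable[F t] fun ω => rhat t ω x' a'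
  chat_adapted : ∀ t x' a' i, Measurable[F t] fun ω => chat t ω x' a' i
  eps_adapted : ∀ t x' a' δ', Measurable[F t] fun ω => eps t ω x' a' δ'
  /-- Assumption (EST): uniform estimation errors, with probability at least `1 − δ'` -/
  est : ∀ δ' : ℝ, 0 < δ' → δ' ≤ 1 →
    ENNReal.ofReal (1 - δ') ≤ P {ω | ∀ t ≤ T, ∀ x' a',
      |rhat t ω x' a' - r x' a'| ≤ eps t ω x' a' δ'
      ∧ ∀ i, |chat t ω x' a' i - c x' a' i| ≤ eps t ω x' a' δ'}

variable {ν : Measure X} {r : X → A → ℝ} {c : X → A → Fin d → ℝ} {T : ℕ} {P : Measure Ω}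

/-- Optimistic (clipped) upper-confidence estimate of the reward function. -/
noncomputable def Protocol.rucb (p : Protocol ν r c T P) (δ' : ℝ) (t : ℕ) (ω : Ω)
    (x' : X) (a' : A) : ℝ :=
  min (max (p.rhat t ω x' a' + p.eps t ω x' a' δ') 0) 1

/-- Optimistic (clipped) lower-confidence estimate of the cost function. -/
noncomputable def Protocol.clcb (p : Protocol ν r c T P) (δ' : ℝ) (t : ℕ) (ω : Ω)
    (x' : X) (a' : A) (i : Fin d) : ℝ :=
  min (max (p.chat t ω x' a' i - p.eps t ω x' a' δ') (-1)) 1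

/-- `β_{T,δ'} = Σ_{t=1}^T ε_{t−1}(x_t,a_t,δ')`. -/
noncomputable def Protocol.beta (p : Protocol ν r c T P) (δ' : ℝ) (ω : Ω) : ℝ :=
  ∑ t ∈ Finset.Icc 1 T, p.eps (t - 1) ω (p.x t ω) (p.act t ω) δ'

/-- `Υ_{T,δ} = max{ β_{T,δ/4}, 2√(dT ln(4T²/δ)), √(2T ln(8(d+1)T/δ)) }`. -/
noncomputable def Protocol.Upsilon (p : Protocol ν r c T P) (δ : ℝ) (ω : Ω) : ℝ :=
  max (p.beta (δ / 4) ω)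
    (max (2 * Real.sqrt (d * T * Real.log (4 * T ^ 2 / δ)))
      (Real.sqrt (2 * T * Real.log (8 * (d + 1) * T / δ))))

/-- The Box B strategy with average cost constraints `B`, step size `γ`, confidence
parameter `δ'` and margin `b`: actions maximize the optimistic Lagrangian, and the dual
variables follow projected-gradient-descent updates. -/
structure BoxB (p : Protocol ν r c T P) (B : Fin d → ℝ) (γ δ' b : ℝ) where
  /-- dual iterates -/
  lam : ℕ → Ω → Fin d → ℝ
  lam_zero : ∀ ω i, lam 0 ω i = 0
  /-- `a_t` maximizes the optimistic Lagrangian with dual variable `λ_{t−1}` -/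
  act_max : ∀ t, 1 ≤ t → t ≤ T → ∀ ω, ∀ a' : A,
    p.rucb δ' (t - 1) ω (p.x t ω) a'
        - ∑ i, (p.clcb δ' (t - 1) ω (p.x t ω) a' i - (B i - b)) * lam (t - 1) ω i
      ≤ p.rucb δ' (t - 1) ω (p.x t ω) (p.act t ω)
        - ∑ i, (p.clcb δ' (t - 1) ω (p.x t ω) (p.act t ω) i - (B i - b)) * lam (t - 1) ω i
  /-- projected-gradient-descent update of the dual variables -/
  lam_update : ∀ t, 1 ≤ t → t ≤ T → ∀ ω i,
    lam t ω i = max (lam (t - 1) ω i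
      + γ * (p.clcb δ' (t - 1) ω (p.x t ω) (p.act t ω) i - (B i - b))) 0


/-!
The dual variables of Box B perform projected gradient descent, so it is enough to keep them within
`‖λ*‖ + 1 + 12 γ √d Υ` of the minimizer `λ*`: the cost deviations of the first `t` rounds are at
most `λ_t / γ` plus estimation and martingale errors. The regret bound of gradient descent, optimism
and the minimality of `λ*` give

`‖λ_t - λ*‖² ≤ ‖λ*‖² + 2γ ∑ (g_k(λ*) - g_k(λ_k)) + lower order terms`,

where `g_k` is the centred Lagrangian of round `k + 1`, and the claim follows by strong induction on
`t` once the sum is bounded linearly in the largest distance from an iterate to `λ*`.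

The estimates are only assumed measurable at a fixed context and action, so `λ_k` need not be
measurable and the sum need not be a martingale. It is compared with its analogue along surrogate
iterates `μ_k`, driven by the conditional mean costs. These are adapted, they dominate `λ_k`, and
`μ_k - λ_k` has total variation at most `4γΥ` in each coordinate. Azuma's inequality is applied to
the increments `g_k(λ*) - g_k(μ_k)`, normalised by the running maximum of `‖λ* - μ_k‖₁`, and to the
increments `g_k(μ_k - u) - g_k(μ_k - v)` for all `u`, `v` in a finite grid. Summation by parts
removes the normalisation in the first case and in the second one makes the offset follow the path
`μ_k - λ_k`, at a cost proportional to its variation.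
-/

/-! ### Summation by parts -/

theorem sum_range_diag_sub {M : Type*} [AddCommGroup M] (Φ : ℕ → ℕ → M) (n : ℕ) :
    ∑ k ∈ range n, (Φ k k - Φ k 0)
      = ∑ s ∈ range n, ∑ k ∈ Ico (s + 1) n, (Φ k (s + 1) - Φ k s) := by
  simp only [range_eq_Ico]
  rw [Finset.sum_Ico_Ico_comm']
  refine sum_congr rfl fun k _ => ?_
  rw [← range_eq_Ico, Finset.sum_range_sub]

theorem sum_mul_le_mul_of_tail_sum_le {W Z : ℕ → ℝ} {z : ℝ} {n : ℕ} (hW : Monotone W)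
    (hW0 : 0 ≤ W 0) (hZ : ∀ s ≤ n, ∑ k ∈ Ico s (n + 1), Z k ≤ z) :
    ∑ k ∈ range (n + 1), W k * Z k ≤ W n * z := by
  have habel := sum_range_diag_sub (fun k s => W s * Z k) (n + 1)
  rw [sum_sub_distrib, ← mul_sum] at habel
  simp only [← sub_mul, ← mul_sum] at habel
  rw [sum_range_succ (fun s => (W (s + 1) - W s) * _), Ico_self, sum_empty, mul_zero, add_zero]
    at habel
  have hincr : ∑ s ∈ range n, (W (s + 1) - W s) * ∑ k ∈ Ico (s + 1) (n + 1), Z k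
      ≤ ∑ s ∈ range n, (W (s + 1) - W s) * z :=
    sum_le_sum fun s hs => mul_le_mul_of_nonneg_left (hZ _ (mem_range.1 hs))
      (sub_nonneg.2 (hW s.le_succ))
  have hfirst : W 0 * ∑ k ∈ range (n + 1), Z k ≤ W 0 * z :=
    mul_le_mul_of_nonneg_left (range_eq_Ico (n + 1) ▸ hZ 0 n.zero_le) hW0
  rw [← sum_mul, sum_range_sub] at hincr
  linarith

theorem sum_Icc_one_eq_sum_range {M : Type*} [AddCommMonoid M] (f : ℕ → M) (n : ℕ) :
    ∑ t ∈ Icc 1 n, f t = ∑ k ∈ range n, f (k + 1) := by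
  rw [range_eq_Ico, Finset.sum_Ico_add' f 0 n 1, zero_add, Ico_add_one_right_eq_Icc]

/-! ### Norms on finite products -/

section Norms

variable {ι : Type*} [Fintype ι] {d : ℕ}

/-- The `ℓ¹` norm of a finite real vector; the norm instance on `ι → ℝ` is the sup norm. -/
def l1norm (v : ι → ℝ) : ℝ := ∑ i, |v i|

theorem l1norm_nonneg (v : ι → ℝ) : 0 ≤ l1norm v := sum_nonneg fun _ _ => abs_nonneg _

theorem l1norm_sub_comm (u v : ι → ℝ) : l1norm (u - v) = l1norm (v - u) :=
  sum_congr rfl fun _ _ => abs_sub_comm _ _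

theorem l1norm_add_le (u v : ι → ℝ) : l1norm (u + v) ≤ l1norm u + l1norm v :=
  (sum_le_sum fun _ _ => abs_add_le _ _).trans_eq sum_add_distrib

theorem l1norm_le_of_forall_abs_le {v : ι → ℝ} {a : ℝ} (h : ∀ i, |v i| ≤ a) :
    l1norm v ≤ Fintype.card ι * a := by
  simpa [l1norm] using sum_le_card_nsmul univ _ a fun i _ => h i

theorem measurable_l1norm : Measurable (l1norm : (ι → ℝ) → ℝ) :=
  Finset.measurable_sum _ fun i _ => (measurable_pi_apply i).abs

theorem enorm_eq_norm (v : Fin d → ℝ) : enorm v = ‖WithLp.toLp 2 v‖ := by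
  simp [EuclideanSpace.norm_eq, enorm]

theorem enorm_nonneg (v : Fin d → ℝ) : 0 ≤ enorm v := Real.sqrt_nonneg _

theorem sq_enorm (v : Fin d → ℝ) : enorm v ^ 2 = ∑ i, v i ^ 2 :=
  Real.sq_sqrt (sum_nonneg fun _ _ => sq_nonneg _)

theorem enorm_add_le (u v : Fin d → ℝ) : enorm (u + v) ≤ enorm u + enorm v := by
  simpa only [enorm_eq_norm, WithLp.toLp_add] using norm_add_le (WithLp.toLp 2 u) (WithLp.toLp 2 v)

theorem enorm_mono {u v : Fin d → ℝ} (h0 : 0 ≤ u) (h : u ≤ v) : enorm u ≤ enorm v :=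
  Real.sqrt_le_sqrt (sum_le_sum fun i _ => pow_le_pow_left₀ (h0 i) (h i) 2)

theorem enorm_smul_of_nonneg {a : ℝ} (ha : 0 ≤ a) (v : Fin d → ℝ) :
    enorm (a • v) = a * enorm v := by
  simp only [enorm_eq_norm, WithLp.toLp_smul, norm_smul, Real.norm_of_nonneg ha]

theorem enorm_const {a : ℝ} (ha : 0 ≤ a) : enorm (fun _ : Fin d => a) = √d * a := by
  simp [enorm, Real.sqrt_sq ha]

theorem l1norm_le_sqrt_mul_enorm (v : Fin d → ℝ) : l1norm v ≤ √d * enorm v := by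
  have hcs := sq_sum_le_card_mul_sum_sq (s := (univ : Finset (Fin d))) (f := fun i => |v i|)
  simp only [sq_abs, card_univ, Fintype.card_fin] at hcs
  rw [enorm, ← Real.sqrt_mul d.cast_nonneg]
  exact Real.le_sqrt_of_sq_le hcs

end Norms

/-! ### Reflected walks and projected gradient descent -/

/-- The walk with increments `s`, started at `0` and reflected at `0` (Lindley recursion); each
coordinate of projected gradient descent on the orthant is of this form. -/
noncomputable def reflectedWalk (s : ℕ → ℝ) : ℕ → ℝ
  | 0 => 0
  | k + 1 => max (reflectedWalk s k + s k) 0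

section ReflectedWalk

variable {s s' : ℕ → ℝ}

theorem reflectedWalk_nonneg (s : ℕ → ℝ) : ∀ k, 0 ≤ reflectedWalk s k
  | 0 => le_rfl
  | _ + 1 => le_max_right _ _

theorem sum_le_reflectedWalk (s : ℕ → ℝ) (n : ℕ) : ∑ k ∈ range n, s k ≤ reflectedWalk s n := by
  induction n with
  | zero => simp [reflectedWalk]
  | succ n ih =>
    rw [sum_range_succ]
    exact (add_le_add_left ih _).trans (le_max_left _ _)

theorem reflectedWalk_mono {n : ℕ} (h : ∀ k < n, s k ≤ s' k) :
    reflectedWalk s n ≤ reflectedWalk s' n := by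
  induction n with
  | zero => rfl
  | succ n ih =>
    exact max_le_max_right _ (add_le_add (ih fun k hk => h k (hk.trans n.lt_succ_self))
      (h n n.lt_succ_self))

theorem reflectedWalk_succ_sub_le {n : ℕ} (h : ∀ k < n + 1, s k ≤ s' k) :
    reflectedWalk s' (n + 1) - reflectedWalk s (n + 1)
      ≤ reflectedWalk s' n - reflectedWalk s n + (s' n - s n) := by
  have hle := reflectedWalk_mono fun k (hk : k < n) => h k (hk.trans n.lt_succ_self)
  have hn := h n n.lt_succ_self
  simp only [reflectedWalk]
  rw [sub_le_iff_le_add]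
  refine max_le ?_ ?_
  · linarith [le_max_left (reflectedWalk s n + s n) 0]
  · linarith [le_max_right (reflectedWalk s n + s n) 0]

theorem reflectedWalk_sub_le_sum {n : ℕ} (h : ∀ k < n, s k ≤ s' k) :
    reflectedWalk s' n - reflectedWalk s n ≤ ∑ k ∈ range n, (s' k - s k) := by
  induction n with
  | zero => simp [reflectedWalk]
  | succ n ih =>
    rw [sum_range_succ]
    linarith [reflectedWalk_succ_sub_le h, ih fun k hk => h k (hk.trans n.lt_succ_self)]

-- The gap ends nonnegative, so its decrements total at most its increments, each `≤ s' k - s k`.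
theorem sum_abs_reflectedWalk_sub_le {n : ℕ} (h : ∀ k < n, s k ≤ s' k) :
    ∑ k ∈ range n, |(reflectedWalk s' (k + 1) - reflectedWalk s (k + 1))
        - (reflectedWalk s' k - reflectedWalk s k)| ≤ 2 * ∑ k ∈ range n, (s' k - s k) := by
  set D : ℕ → ℝ := fun k => reflectedWalk s' k - reflectedWalk s k
  have hD0 : D 0 = 0 := sub_self _
  have hDn : 0 ≤ D n := sub_nonneg.2 (reflectedWalk_mono h)
  calc ∑ k ∈ range n, |D (k + 1) - D k|
      ≤ ∑ k ∈ range n, (2 * (s' k - s k) - (D (k + 1) - D k)) := by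
        refine sum_le_sum fun k hk => ?_
        have hkn := mem_range.1 hk
        have hincr : D (k + 1) ≤ D k + (s' k - s k) :=
          reflectedWalk_succ_sub_le fun j hj => h j (by omega)
        rw [abs_le]
        constructor <;> linarith [h k hkn]
    _ = 2 * ∑ k ∈ range n, (s' k - s k) - D n := by
        rw [sum_sub_distrib, sum_range_sub, mul_sum, hD0, sub_zero]
    _ ≤ _ := sub_le_self _ hDn

theorem sq_reflectedWalk_sub_le (s : ℕ → ℝ) {a : ℝ} (ha : 0 ≤ a) (n : ℕ) :
    (reflectedWalk s n - a) ^ 2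
      ≤ a ^ 2 + 2 * ∑ k ∈ range n, s k * (reflectedWalk s k - a) + ∑ k ∈ range n, s k ^ 2 := by
  induction n with
  | zero => simp [reflectedWalk]
  | succ n ih =>
    have hproj : (max (reflectedWalk s n + s n) 0 - a) ^ 2 ≤ (reflectedWalk s n + s n - a) ^ 2 := by
      refine sq_le_sq.2 ?_
      simpa [max_eq_left ha] using abs_max_sub_max_le_abs (reflectedWalk s n + s n) a 0
    rw [sum_range_succ, sum_range_succ, reflectedWalk]
    linarith

end ReflectedWalk

section DualIterate

variable {ι : Type*}

/-- Projected gradient descent on the nonnegative orthant, started at `0`, with step size `γ` and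
(ascent) directions `v`. -/
noncomputable def dualIterate (γ : ℝ) (v : ℕ → ι → ℝ) (k : ℕ) (i : ι) : ℝ :=
  reflectedWalk (fun j => γ * v j i) k

theorem dualIterate_zero (γ : ℝ) (v : ℕ → ι → ℝ) : dualIterate γ v 0 = 0 := rfl

theorem dualIterate_nonneg (γ : ℝ) (v : ℕ → ι → ℝ) (k : ℕ) (i : ι) : 0 ≤ dualIterate γ v k i :=
  reflectedWalk_nonneg _ k

theorem mul_sum_le_dualIterate (γ : ℝ) (v : ℕ → ι → ℝ) (n : ℕ) (i : ι) :
    γ * ∑ k ∈ range n, v k i ≤ dualIterate γ v n i :=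
  (mul_sum _ _ _).trans_le (sum_le_reflectedWalk _ n)

theorem sum_sq_dualIterate_sub_le [Fintype ι] (γ : ℝ) (v : ℕ → ι → ℝ) {l : ι → ℝ} (hl : 0 ≤ l)
    (n : ℕ) :
    ∑ i, (dualIterate γ v n i - l i) ^ 2
      ≤ ∑ i, l i ^ 2 + 2 * γ * ∑ k ∈ range n, ∑ i, v k i * (dualIterate γ v k i - l i)
        + γ ^ 2 * ∑ k ∈ range n, ∑ i, v k i ^ 2 := by
  refine (sum_le_sum fun i _ =>
    sq_reflectedWalk_sub_le (fun j => γ * v j i) (hl i) n).trans_eq ?_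
  rw [sum_add_distrib, sum_add_distrib, ← mul_sum, sum_comm (s := univ), sum_comm (s := univ)]
  simp only [mul_sum, mul_pow, mul_assoc, dualIterate]

section Perturbation

variable {γ : ℝ} {v v' : ℕ → ι → ℝ} {e : ℕ → ℝ} {n : ℕ}

theorem dualIterate_mono (hγ : 0 ≤ γ) (h : ∀ k < n, v k ≤ v' k) :
    dualIterate γ v n ≤ dualIterate γ v' n :=
  fun i => reflectedWalk_mono fun k hk => mul_le_mul_of_nonneg_left (h k hk i) hγ

theorem sum_scaled_sub_le (hγ : 0 ≤ γ) (h' : ∀ k < n, ∀ i, v' k i ≤ v k i + 2 * e k) (i : ι) :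
    ∑ k ∈ range n, (γ * v' k i - γ * v k i) ≤ 2 * γ * ∑ k ∈ range n, e k := by
  rw [mul_sum]
  refine sum_le_sum fun k hk => ?_
  nlinarith [h' k (mem_range.1 hk) i]

theorem dualIterate_sub_le (hγ : 0 ≤ γ) (h : ∀ k < n, v k ≤ v' k)
    (h' : ∀ k < n, ∀ i, v' k i ≤ v k i + 2 * e k) (i : ι) :
    dualIterate γ v' n i - dualIterate γ v n i ≤ 2 * γ * ∑ k ∈ range n, e k :=
  (reflectedWalk_sub_le_sum fun k hk => mul_le_mul_of_nonneg_left (h k hk i) hγ).trans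
    (sum_scaled_sub_le hγ h' i)

theorem sum_l1norm_dualIterate_sub_le [Fintype ι] (hγ : 0 ≤ γ) (h : ∀ k < n, v k ≤ v' k)
    (h' : ∀ k < n, ∀ i, v' k i ≤ v k i + 2 * e k) :
    ∑ k ∈ range n, l1norm ((dualIterate γ v' (k + 1) - dualIterate γ v (k + 1))
        - (dualIterate γ v' k - dualIterate γ v k))
      ≤ Fintype.card ι * (4 * γ * ∑ k ∈ range n, e k) := by
  simp only [l1norm]
  rw [sum_comm, ← nsmul_eq_mul]
  refine sum_le_card_nsmul univ _ _ fun i _ => ?_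
  have hvar := sum_abs_reflectedWalk_sub_le
    (s := fun j => γ * v j i) (s' := fun j => γ * v' j i) (n := n)
    fun k hk => mul_le_mul_of_nonneg_left (h k hk i) hγ
  refine hvar.trans ?_
  linarith [sum_scaled_sub_le hγ h' i]

end Perturbation

end DualIterate

/-! ### Chaining along a path of small variation -/

section Chaining

variable {ι : Type*}

/-- The point of the lattice `η ℕ^ι` with index `u`. -/
def gridPoint (η : ℝ) (u : ι → ℕ) : ι → ℝ := fun i => η * u i

/-- The index of the largest point of the lattice `η ℕ^ι` below a nonnegative vector. -/
noncomputable def gridFloor (η : ℝ) (v : ι → ℝ) : ι → ℕ := fun i => ⌊v i / η⌋₊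

theorem gridPoint_gridFloor_mem_Icc {η : ℝ} (hη : 0 < η) {v : ι → ℝ} (hv : 0 ≤ v) (i : ι) :
    gridPoint η (gridFloor η v) i ∈ Set.Icc (v i - η) (v i) := by
  have hdiv : η * (v i / η) = v i := mul_div_cancel₀ _ hη.ne'
  have hle := mul_le_mul_of_nonneg_left (Nat.floor_le (div_nonneg (hv i) hη.le)) hη.le
  have hlt := mul_le_mul_of_nonneg_left (Nat.lt_floor_add_one (v i / η)).le hη.le
  constructor <;> simp only [gridPoint, gridFloor] <;> linarith

theorem gridFloor_le {η : ℝ} (hη : 0 < η) {v : ι → ℝ} {N : ℕ} (h : ∀ i, v i ≤ η * N) (i : ι) :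
    gridFloor η v i ≤ N :=
  Nat.floor_le_of_le ((div_le_iff₀' hη).2 (h i))

theorem gridPoint_gridFloor_zero (η : ℝ) : gridPoint η (gridFloor η (0 : ι → ℝ)) = 0 := by
  ext i
  simp [gridPoint, gridFloor]

variable [Fintype ι]

theorem l1norm_gridPoint_gridFloor_sub_le {η : ℝ} (hη : 0 < η) {v w : ι → ℝ} (hv : 0 ≤ v)
    (hw : 0 ≤ w) :
    l1norm (gridPoint η (gridFloor η v) - gridPoint η (gridFloor η w))
      ≤ l1norm (v - w) + Fintype.card ι * η := by
  have hconst : (Fintype.card ι * η : ℝ) = ∑ _i : ι, η := by simp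
  rw [hconst, l1norm, l1norm, ← sum_add_distrib]
  refine sum_le_sum fun i _ => ?_
  obtain ⟨hv₁, hv₂⟩ := gridPoint_gridFloor_mem_Icc hη hv i
  obtain ⟨hw₁, hw₂⟩ := gridPoint_gridFloor_mem_Icc hη hw i
  obtain ⟨h₁, h₂⟩ := abs_le.1 (le_refl |v i - w i|)
  simp only [Pi.sub_apply]
  rw [abs_le]
  constructor <;> linarith

variable {g : ℕ → (ι → ℝ) → ℝ} {K η z : ℝ} {m D : ℕ → ι → ℝ} {N n : ℕ}

-- Telescoping in the offset replaces the moving offset `D k` by fixed ones: the sum of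
-- `g k (m k) - g k (m k - D k)` splits into tail sums over `k` of increments from `D s` to
-- `D (s + 1)`.
theorem sum_sub_le_of_gridPoint_path {u : ℕ → ι → ℕ} (hu0 : gridPoint η (u 0) = 0)
    (hgrid : ∀ s < n, ∑ k ∈ Ico (s + 1) n,
      (g k (m k - gridPoint η (u s)) - g k (m k - gridPoint η (u (s + 1))))
        ≤ z * l1norm (gridPoint η (u s) - gridPoint η (u (s + 1)))) :
    ∑ k ∈ range n, (g k (m k) - g k (m k - gridPoint η (u k)))
      ≤ z * ∑ s ∈ range n, l1norm (gridPoint η (u (s + 1)) - gridPoint η (u s)) := by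
  have htel := sum_range_diag_sub (fun k s => -g k (m k - gridPoint η (u s))) n
  simp only [hu0, sub_zero, neg_sub_neg] at htel
  rw [htel, mul_sum]
  refine sum_le_sum fun s hs => (hgrid s (mem_range.1 hs)).trans_eq ?_
  rw [l1norm_sub_comm]

theorem sum_sub_le_of_grid (hg : ∀ k l l', |g k l - g k l'| ≤ K * l1norm (l - l'))
    (hK : 0 ≤ K) (hη : 0 < η) (hz : 0 ≤ z) (hD0 : D 0 = 0) (hDnonneg : ∀ k ≤ n, 0 ≤ D k)
    (hDle : ∀ k ≤ n, ∀ i, D k i ≤ η * N)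
    (hgrid : ∀ u v : ι → ℕ, (∀ i, u i ≤ N) → (∀ i, v i ≤ N) → ∀ s < n,
      ∑ k ∈ Ico (s + 1) n, (g k (m k - gridPoint η u) - g k (m k - gridPoint η v))
        ≤ z * l1norm (gridPoint η u - gridPoint η v)) :
    ∑ k ∈ range n, (g k (m k) - g k (m k - D k))
      ≤ z * (∑ s ∈ range n, l1norm (D (s + 1) - D s) + n * (Fintype.card ι * η))
        + n * (K * (Fintype.card ι * η)) := by
  set u : ℕ → ι → ℕ := fun k => gridFloor η (D k)
  have hu0 : gridPoint η (u 0) = 0 := by simp only [u, hD0, gridPoint_gridFloor_zero]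
  have hround : ∀ k ∈ range n, g k (m k - gridPoint η (u k)) - g k (m k - D k)
      ≤ K * (Fintype.card ι * η) := fun k hk => by
    refine (le_abs_self _).trans ((hg k _ _).trans (mul_le_mul_of_nonneg_left ?_ hK))
    refine l1norm_le_of_forall_abs_le fun i => ?_
    obtain ⟨h₁, h₂⟩ := gridPoint_gridFloor_mem_Icc hη (hDnonneg k (mem_range_le hk)) i
    rw [sub_sub_sub_cancel_left, Pi.sub_apply, abs_le]
    constructor <;> linarith
  have hpath := sum_sub_le_of_gridPoint_path hu0 fun s (hs : s < n) =>
    hgrid (u s) (u (s + 1)) (gridFloor_le hη (hDle s hs.le))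
      (gridFloor_le hη (hDle (s + 1) hs)) s hs
  have hvar : ∑ s ∈ range n, l1norm (gridPoint η (u (s + 1)) - gridPoint η (u s))
      ≤ ∑ s ∈ range n, l1norm (D (s + 1) - D s) + n * (Fintype.card ι * η) := by
    refine (sum_le_sum fun s hs => l1norm_gridPoint_gridFloor_sub_le hη
      (hDnonneg (s + 1) (mem_range.1 hs)) (hDnonneg s (mem_range_le hs))).trans_eq ?_
    rw [sum_add_distrib, sum_const, card_range, nsmul_eq_mul]
  calc ∑ k ∈ range n, (g k (m k) - g k (m k - D k))
      = ∑ k ∈ range n, (g k (m k) - g k (m k - gridPoint η (u k)))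
        + ∑ k ∈ range n, (g k (m k - gridPoint η (u k)) - g k (m k - D k)) := by
        simp only [← sum_add_distrib, sub_add_sub_cancel]
    _ ≤ _ := add_le_add (hpath.trans (mul_le_mul_of_nonneg_left hvar hz))
        ((sum_le_card_nsmul _ _ _ hround).trans_eq (by rw [card_range, nsmul_eq_mul]))

end Chaining

/-! ### Concentration of bounded martingale differences -/

section Azuma

variable {Ω : Type*} {G m0 : MeasurableSpace Ω} {P : Measure Ω}

/-- `ξ` is a martingale difference sequence bounded by `1` over `T` rounds, the increment `ξ k`
being revealed at time `k + 1`. -/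
structure IsBddMartingaleDiff (P : Measure Ω) (F : Filtration ℕ m0) (T : ℕ)
    (ξ : ℕ → Ω → ℝ) : Prop where
  measurable : ∀ k < T, Measurable[F (k + 1)] (ξ k)
  abs_le_one : ∀ k < T, ∀ᵐ ω ∂P, |ξ k ω| ≤ 1
  condExp_eq_zero : ∀ k < T, P[ξ k | F k] =ᵐ[P] 0

theorem integral_mul_eq_zero_of_condExp_eq_zero [IsFiniteMeasure P]
    (hG : G ≤ m0) {Y ξ : Ω → ℝ} (hY : StronglyMeasurable[G] Y) (hYξ : Integrable (Y * ξ) P)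
    (hξ : Integrable ξ P) (hξ0 : P[ξ | G] =ᵐ[P] 0) : ∫ ω, Y ω * ξ ω ∂P = 0 := by
  calc ∫ ω, Y ω * ξ ω ∂P = ∫ ω, (P[Y * ξ | G]) ω ∂P := (integral_condExp hG).symm
    _ = ∫ _, (0 : ℝ) ∂P := by
        refine integral_congr_ae ?_
        filter_upwards [condExp_mul_of_stronglyMeasurable_left hY hYξ hξ, hξ0] with ω hpull h0
        rw [hpull, Pi.mul_apply, h0, Pi.zero_apply, mul_zero]
    _ = 0 := integral_zero _ _

theorem hasSubgaussianMGF_add_of_condExp_eq_zero [IsFiniteMeasure P]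
    (hG : G ≤ m0) {Y ξ : Ω → ℝ} {c : NNReal} (hY : HasSubgaussianMGF Y c P)
    (hYG : Measurable[G] Y) (hξm : AEStronglyMeasurable ξ P) (hξ1 : ∀ᵐ ω ∂P, |ξ ω| ≤ 1)
    (hξ0 : P[ξ | G] =ᵐ[P] 0) :
    HasSubgaussianMGF (fun ω => Y ω + ξ ω) (c + 1) P := by
  have hexp (u : ℝ) : StronglyMeasurable[G] fun ω => Real.exp (u * Y ω) :=
    (hYG.const_mul u).exp.stronglyMeasurable
  have hprod (u : ℝ) : Integrable (fun ω => Real.exp (u * Y ω) * ξ ω) P :=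
    (hY.integrable_exp_mul u).mul_bdd hξm hξ1
  have hcond (u : ℝ) : ∫ ω, Real.exp (u * Y ω) * ξ ω ∂P = 0 :=
    integral_mul_eq_zero_of_condExp_eq_zero hG (hexp u) (hprod u)
      (.of_bound hξm 1 hξ1) hξ0
  have hint (u : ℝ) : Integrable (fun ω => Real.exp (u * Y ω) * Real.cosh u
      + Real.exp (u * Y ω) * ξ ω * Real.sinh u) P :=
    ((hY.integrable_exp_mul u).mul_const _).add ((hprod u).mul_const _)
  have hdom (u : ℝ) : ∀ᵐ ω ∂P, Real.exp (u * (Y ω + ξ ω)) ≤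
      Real.exp (u * Y ω) * Real.cosh u + Real.exp (u * Y ω) * ξ ω * Real.sinh u := by
    filter_upwards [hξ1] with ω h1
    rw [mul_add, Real.exp_add, mul_assoc _ (ξ ω), ← mul_add, mul_comm u (ξ ω)]
    exact mul_le_mul_of_nonneg_left (Real.exp_mul_le_cosh_add_mul_sinh h1 u) (Real.exp_pos _).le
  have hm : AEStronglyMeasurable (fun ω => Y ω + ξ ω) P :=
    (hYG.mono hG le_rfl).aestronglyMeasurable.add hξm
  refine ⟨fun u => (hint u).mono' (hm.aemeasurable.const_mul u).exp.aestronglyMeasurable ?_,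
    fun u => ?_⟩
  · simpa using hdom u
  calc mgf (fun ω => Y ω + ξ ω) P u
      ≤ mgf Y P u * Real.cosh u := by
        refine (integral_mono_of_nonneg (.of_forall fun _ => (Real.exp_pos _).le) (hint u)
          (hdom u)).trans_eq ?_
        rw [integral_add ((hY.integrable_exp_mul u).mul_const _) ((hprod u).mul_const _),
          integral_mul_const, integral_mul_const, hcond, zero_mul, add_zero, mgf]
    _ ≤ Real.exp (c * u ^ 2 / 2) * Real.exp (u ^ 2 / 2) :=
        mul_le_mul (hY.mgf_le u) (Real.cosh_le_exp_half_sq u) (Real.cosh_pos u).le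
          (Real.exp_pos _).le
    _ = Real.exp ((c + 1 : NNReal) * u ^ 2 / 2) := by
        rw [← Real.exp_add]
        push_cast
        ring_nf

namespace IsBddMartingaleDiff

variable [IsProbabilityMeasure P] {F : Filtration ℕ m0} {T : ℕ} {ξ : ℕ → Ω → ℝ}

theorem hasSubgaussianMGF_sum_Ico (h : IsBddMartingaleDiff P F T ξ) (s : ℕ) {t : ℕ}
    (ht : t ≤ T) : HasSubgaussianMGF (fun ω => ∑ k ∈ Ico s t, ξ k ω) t P := by
  have hzero {c : NNReal} : HasSubgaussianMGF (fun _ : Ω => (0 : ℝ)) c P :=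
    ⟨by simp, fun u => by simpa using by positivity⟩
  induction t with
  | zero => simpa only [Ico_eq_empty_of_le s.zero_le, sum_empty] using hzero
  | succ t ih =>
    rcases lt_or_ge t s with hts | hst
    · simpa [Ico_eq_empty_of_le (Nat.succ_le_of_lt hts)] using hzero
    simp only [sum_Ico_succ_top hst, Nat.cast_succ]
    refine hasSubgaussianMGF_add_of_condExp_eq_zero (F.le t) (ih (by omega)) ?_
      ((h.measurable t ht).mono (F.le _) le_rfl).aestronglyMeasurable (h.abs_le_one t ht)
      (h.condExp_eq_zero t ht)
    refine Finset.measurable_sum _ fun k hk => ?_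
    have hkt := (mem_Ico.1 hk).2
    exact (h.measurable k (hkt.trans ht)).mono (F.mono hkt) le_rfl

theorem measureReal_sqrt_lt_sum_Ico_le (h : IsBddMartingaleDiff P F T ξ) (s : ℕ) {t : ℕ}
    (ht : t ≤ T) {y : ℝ} (hy : 0 ≤ y) :
    P.real {ω | √(2 * T * y) < ∑ k ∈ Ico s t, ξ k ω} ≤ Real.exp (-y) := by
  rcases Nat.eq_zero_or_pos t with rfl | ht0
  · simp only [Ico_eq_empty_of_le s.zero_le, sum_empty, (Real.sqrt_nonneg _).not_gt]
    simpa using (Real.exp_pos (-y)).le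
  have htT : (t : ℝ) ≤ T := by exact_mod_cast ht
  have ht0' : (0 : ℝ) < t := by exact_mod_cast ht0
  calc P.real {ω | √(2 * T * y) < ∑ k ∈ Ico s t, ξ k ω}
      ≤ P.real {ω | √(2 * T * y) ≤ ∑ k ∈ Ico s t, ξ k ω} :=
        measureReal_mono (Set.ofPred_subset_ofPred.2 fun _ => le_of_lt)
    _ ≤ Real.exp (-√(2 * T * y) ^ 2 / (2 * t)) := by
        simpa using (h.hasSubgaussianMGF_sum_Ico s ht).measure_ge_le (Real.sqrt_nonneg (2 * T * y))
    _ ≤ Real.exp (-y) := by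
        rw [Real.sq_sqrt (by positivity), Real.exp_le_exp, div_le_iff₀ (mul_pos two_pos ht0')]
        nlinarith

end IsBddMartingaleDiff

theorem measure_exists_sqrt_lt_sum_Ico_le [IsProbabilityMeasure P] {F : Filtration ℕ m0} {T : ℕ}
    {κ : Type*} (s : Finset κ) {ξ : κ → ℕ → Ω → ℝ} {a b : κ → ℕ}
    (h : ∀ j ∈ s, IsBddMartingaleDiff P F T (ξ j)) (hb : ∀ j ∈ s, b j ≤ T) {y : ℝ} (hy : 0 ≤ y) :
    P {ω | ∃ j ∈ s, √(2 * T * y) < ∑ k ∈ Ico (a j) (b j), ξ j k ω}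
      ≤ ENNReal.ofReal (#s * Real.exp (-y)) := by
  have hunion : {ω | ∃ j ∈ s, √(2 * T * y) < ∑ k ∈ Ico (a j) (b j), ξ j k ω}
      = ⋃ j ∈ s, {ω | √(2 * T * y) < ∑ k ∈ Ico (a j) (b j), ξ j k ω} := by
    ext ω
    simp
  rw [hunion, ← nsmul_eq_mul, ← ofReal_measureReal (measure_ne_top _ _)]
  refine ENNReal.ofReal_le_ofReal ((measureReal_biUnion_finset_le _ _).trans ?_)
  exact sum_le_card_nsmul _ _ _ fun j hj =>
    (h j hj).measureReal_sqrt_lt_sum_Ico_le (a j) (hb j hj) hy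

end Azuma

section Freezing

variable {Ω E V : Type*} {G m0 : MeasurableSpace Ω} {P : Measure Ω} [IsProbabilityMeasure P]
  [MeasurableSpace E] [MeasurableSpace V] {x : Ω → E} {v : Ω → V}
  {Ψ : V × E → ℝ}

theorem integral_comp_prodMk_eq_zero_of_indep (hG : G ≤ m0) (hx : Measurable x)
    (hind : Indep (MeasurableSpace.comap x inferInstance) G P) (hv : Measurable[G] v)
    (hΨ : Measurable Ψ) (hΨ0 : ∀ w, ∫ y, Ψ (w, y) ∂(P.map x) = 0) :
    ∫ ω, Ψ (v ω, x ω) ∂P = 0 := by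
  have hv' : Measurable v := hv.mono hG le_rfl
  have hvx : IndepFun v x P :=
    (IndepFun_iff_Indep _ _ _).2 (indep_of_indep_of_le_right hind hv.comap_le).symm
  have : IsProbabilityMeasure (P.map x) := Measure.isProbabilityMeasure_map hx.aemeasurable
  have : IsProbabilityMeasure (P.map v) := Measure.isProbabilityMeasure_map hv'.aemeasurable
  rw [← integral_map (φ := fun ω => (v ω, x ω)) (hv'.prodMk hx).aemeasurable
      hΨ.aestronglyMeasurable,
    (indepFun_iff_map_prod_eq_prod_map_map hv'.aemeasurable hx.aemeasurable).1 hvx]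
  by_cases hint : Integrable Ψ ((P.map v).prod (P.map x))
  · simp [integral_prod _ hint, hΨ0]
  · exact integral_undef hint

theorem condExp_comp_prodMk_eq_zero_of_indep (hG : G ≤ m0) (hx : Measurable x)
    (hind : Indep (MeasurableSpace.comap x inferInstance) G P) (hv : Measurable[G] v)
    (hΨ : Measurable Ψ) (hint : Integrable (fun ω => Ψ (v ω, x ω)) P)
    (hΨ0 : ∀ w, ∫ y, Ψ (w, y) ∂(P.map x) = 0) :
    P[fun ω => Ψ (v ω, x ω) | G] =ᵐ[P] 0 := by
  refine (ae_eq_condExp_of_forall_setIntegral_eq hG hint (fun _ _ _ => integrableOn_zero)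
    (fun S hS _ => ?_) aestronglyMeasurable_zero).symm
  have hSG : Measurable[G] (S.indicator (1 : Ω → ℝ)) :=
    (stronglyMeasurable_one.indicator hS).measurable
  have hmul : ∫ ω, S.indicator (1 : Ω → ℝ) ω * Ψ (v ω, x ω) ∂P = 0 :=
    integral_comp_prodMk_eq_zero_of_indep (v := fun ω => (S.indicator (1 : Ω → ℝ) ω, v ω))
      (Ψ := fun q : (ℝ × V) × E => q.1.1 * Ψ (q.1.2, q.2)) hG hx hind (hSG.prodMk hv)
      (by fun_prop) fun w => by simp [integral_const_mul, hΨ0]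
  calc ∫ ω in S, (0 : Ω → ℝ) ω ∂P = ∫ ω, S.indicator (1 : Ω → ℝ) ω * Ψ (v ω, x ω) ∂P := by
        simp [hmul]
    _ = ∫ ω, S.indicator (fun ω => Ψ (v ω, x ω)) ω ∂P := by
        refine integral_congr_ae (.of_forall fun ω => ?_)
        by_cases hω : ω ∈ S <;> simp [hω]
    _ = ∫ ω in S, Ψ (v ω, x ω) ∂P := integral_indicator (hG _ hS)

end Freezing

theorem ofReal_sub_le_measure_inter {Ω : Type*} {m0 : MeasurableSpace Ω} {P : Measure Ω}
    {E S : Set Ω} {a b : ℝ} (hb : 0 ≤ b) (hE : ENNReal.ofReal a ≤ P E)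
    (hS : P Sᶜ ≤ ENNReal.ofReal b) : ENNReal.ofReal (a - b) ≤ P (E ∩ S) := by
  rw [ENNReal.ofReal_sub a hb]
  calc ENNReal.ofReal a - ENNReal.ofReal b ≤ P E - P Sᶜ := tsub_le_tsub hE hS
    _ ≤ P (E \ Sᶜ) := le_measure_sdiff
    _ = P (E ∩ S) := by rw [Set.sdiff_compl]

/-! ### Lagrangians -/

section Lagrangian

variable {X A : Type*} [Fintype A] [Nonempty A] {d : ℕ} {r : X → A → ℝ} {c : X → A → Fin d → ℝ}
  {C : Fin d → ℝ}

/-- The Lagrangian `max_a {r(x,a) − ⟨c(x,a) − C, λ⟩}` of the context `x`, whose `ν`-average is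
`L(λ,C)`. -/
noncomputable def lagrangian (r : X → A → ℝ) (c : X → A → Fin d → ℝ) (C : Fin d → ℝ) (x : X)
    (l : Fin d → ℝ) : ℝ :=
  univ.sup' univ_nonempty fun a => r x a - ∑ i, (c x a i - C i) * l i

theorem sub_sum_mul_le_lagrangian (x : X) (l : Fin d → ℝ) (a : A) :
    r x a - ∑ i, (c x a i - C i) * l i ≤ lagrangian r c C x l :=
  le_sup' (fun a => r x a - ∑ i, (c x a i - C i) * l i) (mem_univ a)

theorem abs_lagrangian_sub_le {K : ℝ} (hC : ∀ x a i, |c x a i - C i| ≤ K) (x : X)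
    (l l' : Fin d → ℝ) : |lagrangian r c C x l - lagrangian r c C x l'| ≤ K * l1norm (l - l') := by
  have hle (l l' : Fin d → ℝ) :
      lagrangian r c C x l ≤ lagrangian r c C x l' + K * l1norm (l - l') := by
    refine sup'_le _ _ fun a _ => ?_
    have hsum : ∑ i, (c x a i - C i) * l' i - ∑ i, (c x a i - C i) * l i
        ≤ K * l1norm (l - l') := by
      rw [← sum_sub_distrib, l1norm, mul_sum]
      refine sum_le_sum fun i _ => ?_
      rw [← mul_sub, Pi.sub_apply, abs_sub_comm (l i)]
      exact (le_abs_self _).trans ((abs_mul _ _).trans_le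
        (mul_le_mul_of_nonneg_right (hC x a i) (abs_nonneg _)))
    linarith [sub_sum_mul_le_lagrangian (r := r) (c := c) (C := C) x l' a]
  have hll' := hle l l'
  have hl'l := hle l' l
  rw [l1norm_sub_comm] at hl'l
  rw [abs_le]
  constructor <;> linarith

theorem abs_lagrangian_zero_le (hr : ∀ x a, r x a ∈ Set.Icc (0 : ℝ) 1) (x : X) :
    |lagrangian r c C x 0| ≤ 1 := by
  have hle : lagrangian r c C x 0 ≤ 1 := sup'_le _ _ fun a _ => by simpa using (hr x a).2
  have hge := sub_sum_mul_le_lagrangian (r := r) (c := c) (C := C) x 0 (Classical.arbitrary A)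
  have hr0 := (hr x (Classical.arbitrary A)).1
  simp only [Pi.zero_apply, mul_zero, sum_const_zero, sub_zero] at hge
  rw [abs_le]
  constructor <;> linarith

-- The optimistic estimates `rhat ≥ r`, `chat ≤ c` make the value of the chosen action `a` dominate
-- the true Lagrangian at `lam`; at the comparator `l` they cost at most their estimation error.
theorem sum_mul_sub_le_lagrangian_sub {x : X} {a : A} {rhat : A → ℝ} {chat : A → Fin d → ℝ}
    {e : ℝ} {lam l : Fin d → ℝ} (hlam : 0 ≤ lam) (hl : 0 ≤ l)
    (hmax : ∀ a', rhat a' - ∑ i, (chat a' i - C i) * lam i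
      ≤ rhat a - ∑ i, (chat a i - C i) * lam i)
    (hr : ∀ a', r x a' ≤ rhat a') (hc : ∀ a' i, chat a' i ≤ c x a' i)
    (hr' : rhat a ≤ r x a + 2 * e) (hc' : ∀ i, c x a i ≤ chat a i + 2 * e) :
    ∑ i, (chat a i - C i) * (lam i - l i)
      ≤ lagrangian r c C x l - lagrangian r c C x lam + 2 * e * (1 + ∑ i, l i) := by
  have hopt : lagrangian r c C x lam ≤ rhat a - ∑ i, (chat a i - C i) * lam i := by
    refine sup'_le _ _ fun a' _ => le_trans ?_ (hmax a')
    exact sub_le_sub (hr a') (sum_le_sum fun i _ =>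
      mul_le_mul_of_nonneg_right (sub_le_sub_right (hc a' i) _) (hlam i))
  have hcost : ∑ i, (c x a i - C i) * l i ≤ ∑ i, (chat a i - C i) * l i + 2 * e * ∑ i, l i := by
    rw [mul_sum, ← sum_add_distrib]
    refine sum_le_sum fun i _ => ?_
    rw [← add_mul]
    exact mul_le_mul_of_nonneg_right (by linarith [hc' i]) (hl i)
  have hsplit : ∑ i, (chat a i - C i) * (lam i - l i)
      = ∑ i, (chat a i - C i) * lam i - ∑ i, (chat a i - C i) * l i := by
    simp only [mul_sub, sum_sub_distrib]
  linarith [sub_sum_mul_le_lagrangian (r := r) (c := c) (C := C) x l a]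

variable [MeasurableSpace X] {ν : Measure X}

theorem measurable_lagrangian (hrm : ∀ a, Measurable fun x => r x a)
    (hcm : ∀ a i, Measurable fun x => c x a i) :
    Measurable fun q : X × (Fin d → ℝ) => lagrangian r c C q.1 q.2 := by
  have heq : (fun q : X × (Fin d → ℝ) => lagrangian r c C q.1 q.2) = univ.sup' univ_nonempty
      fun a q => r q.1 a - ∑ i, (c q.1 a i - C i) * q.2 i := by
    ext q
    simp only [lagrangian, Finset.sup'_apply]
  rw [heq]
  exact Finset.measurable_sup' _ fun a _ => by fun_prop

/-- The deviation of the Lagrangian of the context `x` from its `ν`-average. -/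
noncomputable def lagrangianDev (ν : Measure X) (r : X → A → ℝ) (c : X → A → Fin d → ℝ)
    (C : Fin d → ℝ) (x : X) (l : Fin d → ℝ) : ℝ :=
  lagrangian r c C x l - L ν r c l C

theorem lagrangian_sub_le_lagrangianDev_sub {l l' : Fin d → ℝ} (h : L ν r c l C ≤ L ν r c l' C)
    (x : X) : lagrangian r c C x l - lagrangian r c C x l'
      ≤ lagrangianDev ν r c C x l - lagrangianDev ν r c C x l' := by
  unfold lagrangianDev
  linarith

variable [IsProbabilityMeasure ν]

theorem integrable_lagrangian {K : ℝ} (hr : ∀ x a, r x a ∈ Set.Icc (0 : ℝ) 1)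
    (hC : ∀ x a i, |c x a i - C i| ≤ K) (hrm : ∀ a, Measurable fun x => r x a)
    (hcm : ∀ a i, Measurable fun x => c x a i) (l : Fin d → ℝ) :
    Integrable (fun x => lagrangian r c C x l) ν := by
  refine .of_bound ((measurable_lagrangian hrm hcm).comp
    (measurable_id.prodMk measurable_const)).aestronglyMeasurable (1 + K * l1norm (l - 0))
    (.of_forall fun x => ?_)
  have hlip := abs_lagrangian_sub_le (r := r) hC x l 0
  have hzero := abs_lagrangian_zero_le (c := c) (C := C) hr x
  rw [Real.norm_eq_abs]
  linarith [abs_sub_abs_le_abs_sub (lagrangian r c C x l) (lagrangian r c C x 0)]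

theorem integral_lagrangianDev_sub {K : ℝ} (hr : ∀ x a, r x a ∈ Set.Icc (0 : ℝ) 1)
    (hC : ∀ x a i, |c x a i - C i| ≤ K) (hrm : ∀ a, Measurable fun x => r x a)
    (hcm : ∀ a i, Measurable fun x => c x a i) (l l' : Fin d → ℝ) :
    ∫ x, (lagrangianDev ν r c C x l - lagrangianDev ν r c C x l') ∂ν = 0 := by
  have hint l := integrable_lagrangian (ν := ν) hr hC hrm hcm l
  have hdev l : Integrable (fun x => lagrangianDev ν r c C x l) ν :=
    (hint l).sub (integrable_const _)
  have hzero l : ∫ x, lagrangianDev ν r c C x l ∂ν = 0 := by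
    simp only [lagrangianDev]
    rw [integral_sub (hint l) (integrable_const _), integral_const, probReal_univ, one_smul]
    exact sub_self _
  rw [integral_sub (hdev l) (hdev l'), hzero, hzero, sub_zero]

theorem abs_lagrangianDev_sub_le {K : ℝ} (hr : ∀ x a, r x a ∈ Set.Icc (0 : ℝ) 1)
    (hC : ∀ x a i, |c x a i - C i| ≤ K) (hrm : ∀ a, Measurable fun x => r x a)
    (hcm : ∀ a i, Measurable fun x => c x a i) (x : X) (l l' : Fin d → ℝ) :
    |lagrangianDev ν r c C x l - lagrangianDev ν r c C x l'| ≤ 2 * K * l1norm (l - l') := by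
  have hL : |L ν r c l C - L ν r c l' C| ≤ K * l1norm (l - l') := by
    have hbound := norm_integral_le_of_norm_le_const (μ := ν)
      (f := fun y => lagrangian r c C y l - lagrangian r c C y l')
      (.of_forall fun y => abs_lagrangian_sub_le (r := r) hC y l l')
    rwa [probReal_univ, mul_one, integral_sub (integrable_lagrangian hr hC hrm hcm l)
      (integrable_lagrangian hr hC hrm hcm l')] at hbound
  have hlag := abs_lagrangian_sub_le (r := r) hC x l l'
  calc |lagrangianDev ν r c C x l - lagrangianDev ν r c C x l'|
      = |(lagrangian r c C x l - lagrangian r c C x l') - (L ν r c l C - L ν r c l' C)| := by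
        rw [lagrangianDev, lagrangianDev, sub_sub_sub_comm]
    _ ≤ 2 * K * l1norm (l - l') := (abs_sub _ _).trans (by linarith)

theorem measurable_lagrangianDev (hrm : ∀ a, Measurable fun x => r x a)
    (hcm : ∀ a i, Measurable fun x => c x a i) :
    Measurable fun q : X × (Fin d → ℝ) => lagrangianDev ν r c C q.1 q.2 := by
  have hL : Measurable fun l : Fin d → ℝ => L ν r c l C :=
    (measurable_lagrangian (C := C) hrm hcm).stronglyMeasurable.integral_prod_left.measurable
  exact (measurable_lagrangian hrm hcm).sub (hL.comp measurable_snd)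

end Lagrangian

/-! ### The surrogate dual iterates -/

section PredictableIterates

variable {Ω ι : Type*} {m0 : MeasurableSpace Ω} {F : Filtration ℕ m0}

theorem measurable_dualIterate {v : ℕ → Ω → ι → ℝ} (hv : ∀ k i, Measurable[F (k + 1)] (v k · i))
    (γ : ℝ) (k : ℕ) : Measurable[F k] fun ω => dualIterate γ (v · ω) k := by
  refine @measurable_pi_lambda _ _ _ (F k) _ _ fun i => ?_
  induction k with
  | zero => exact measurable_const
  | succ k ih =>
    exact ((ih.mono (F.mono k.le_succ) le_rfl).add ((hv k i).const_mul γ)).max measurable_const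

theorem measurable_partialSups {f : ℕ → Ω → ℝ} (hf : ∀ k, Measurable[F k] (f k)) (k : ℕ) :
    Measurable[F k] fun ω => partialSups (f · ω) k := by
  induction k with
  | zero => simpa using hf 0
  | succ k ih =>
    simp only [partialSups_add_one]
    exact (ih.mono (F.mono k.le_succ) le_rfl).sup (hf (k + 1))

end PredictableIterates

namespace Protocol

variable {X : Type*} [MeasurableSpace X] {A : Type*} [MeasurableSpace A] {d : ℕ} {Ω : Type*}
  [MeasurableSpace Ω] {ν : Measure X} {P : Measure Ω} {r : X → A → ℝ} {c : X → A → Fin d → ℝ}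
  {T : ℕ} {C : Fin d → ℝ} {K : ℝ}

/-- The information available in round `k + 1` between the choice of the action and the
revelation of the costs. -/
@[reducible] def preRound (p : Protocol ν r c T P) (k : ℕ) : MeasurableSpace Ω :=
  p.F k ⊔ MeasurableSpace.comap (p.x (k + 1)) inferInstance
    ⊔ MeasurableSpace.comap (p.act (k + 1)) inferInstance

/-- The conditional mean of the cost vector of round `k + 1`. Unlike `c (x_{k+1}, a_{k+1})`, which
it equals almost surely, it is adapted without assuming `c` measurable in the action. -/
noncomputable def meanCost (p : Protocol ν r c T P) (k : ℕ) (ω : Ω) (i : Fin d) : ℝ :=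
  (P[fun ω => p.cost (k + 1) ω i | p.preRound k]) ω

/-- The dual iterates driven by the conditional mean costs. They are adapted, in contrast to the
iterates of Box B: the estimates are not assumed jointly measurable. -/
noncomputable def surrogateDual (p : Protocol ν r c T P) (C : Fin d → ℝ) (γ : ℝ) (k : ℕ) (ω : Ω) :
    Fin d → ℝ :=
  dualIterate γ (fun j i => p.meanCost j ω i - C i) k

theorem le_preRound (p : Protocol ν r c T P) (k : ℕ) : (p.F k : MeasurableSpace Ω) ≤ p.preRound k :=
  le_sup_of_le_left le_sup_left

theorem preRound_le (p : Protocol ν r c T P) (k : ℕ) : p.preRound k ≤ p.F (k + 1) :=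
  sup_le (sup_le (p.F.mono k.le_succ) (p.x_adapted (k + 1)).comap_le)
    (p.act_adapted (k + 1)).comap_le

theorem measurable_meanCost (p : Protocol ν r c T P) (k : ℕ) (i : Fin d) :
    Measurable[p.F (k + 1)] fun ω => p.meanCost k ω i :=
  stronglyMeasurable_condExp.measurable.mono (p.preRound_le k) le_rfl

theorem measurable_surrogateDual (p : Protocol ν r c T P) (C : Fin d → ℝ) (γ : ℝ) (k : ℕ) :
    Measurable[p.F k] (p.surrogateDual C γ k) :=
  measurable_dualIterate (fun k i => (p.measurable_meanCost k i).sub_const (C i)) γ k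

theorem ae_meanCost_eq (p : Protocol ν r c T P) :
    ∀ᵐ ω ∂P, ∀ k < T, ∀ i, p.meanCost k ω i = c (p.x (k + 1) ω) (p.act (k + 1) ω) i := by
  refine ae_all_iff.2 fun k => ?_
  by_cases hk : k < T
  · simp only [hk, true_imp_iff, ae_all_iff]
    exact p.cost_condExp (k + 1) (by omega) hk
  · exact .of_forall fun ω hk' => absurd hk' hk

variable [IsProbabilityMeasure P]

theorem isBddMartingaleDiff_cost_sub_meanCost (p : Protocol ν r c T P)
    (hc : ∀ x a i, c x a i ∈ Set.Icc (-1 : ℝ) 1) (i : Fin d) :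
    IsBddMartingaleDiff P p.F T fun k ω => (p.cost (k + 1) ω i - p.meanCost k ω i) / 2 where
  measurable k _ := ((p.cost_adapted (k + 1) i).sub (p.measurable_meanCost k i)).div_const 2
  abs_le_one k hk := by
    filter_upwards [p.ae_meanCost_eq] with ω hω
    obtain ⟨h₁, h₂⟩ := p.cost_mem (k + 1) ω i
    obtain ⟨h₃, h₄⟩ := hc (p.x (k + 1) ω) (p.act (k + 1) ω) i
    rw [hω k hk i, abs_le]
    constructor <;> linarith
  condExp_eq_zero k _ := by
    have hle := p.F.le (k + 1)
    have hint : Integrable (fun ω => p.cost (k + 1) ω i) P :=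
      .of_bound ((p.cost_adapted (k + 1) i).mono hle le_rfl).aestronglyMeasurable 1
        (.of_forall fun ω => abs_le.2 (p.cost_mem (k + 1) ω i))
    have htower : P[fun ω => p.meanCost k ω i | p.F k]
        =ᵐ[P] P[fun ω => p.cost (k + 1) ω i | p.F k] :=
      condExp_condExp_of_le (p.le_preRound k) ((p.preRound_le k).trans hle)
    have hsub : P[fun ω => p.cost (k + 1) ω i - p.meanCost k ω i | p.F k] =ᵐ[P] 0 := by
      filter_upwards [condExp_sub hint (integrable_condExp (m := p.preRound k)) (p.F k), htower]
        with ω hω hω'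
      exact hω.trans (sub_eq_zero.2 hω'.symm)
    filter_upwards [condExp_smul (2⁻¹ : ℝ)
      (fun ω => p.cost (k + 1) ω i - p.meanCost k ω i) (p.F k), hsub] with ω hω hω'
    simp only [div_eq_inv_mul]
    exact hω.trans (by simp [hω'])

variable [Fintype A] [Nonempty A] [IsProbabilityMeasure ν]

theorem isBddMartingaleDiff_lagrangianDev (p : Protocol ν r c T P)
    (hr : ∀ x a, r x a ∈ Set.Icc (0 : ℝ) 1) (hC : ∀ x a i, |c x a i - C i| ≤ K)
    (hrm : ∀ a, Measurable fun x => r x a) (hcm : ∀ a i, Measurable fun x => c x a i)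
    {θ θ' : ℕ → Ω → Fin d → ℝ} {w : ℕ → Ω → ℝ} (hθ : ∀ k, Measurable[p.F k] (θ k))
    (hθ' : ∀ k, Measurable[p.F k] (θ' k)) (hw : ∀ k, Measurable[p.F k] (w k))
    (hK : 0 ≤ K) (hdist : ∀ k ω, l1norm (θ k ω - θ' k ω) ≤ w k ω) :
    IsBddMartingaleDiff P p.F T fun k ω =>
      (lagrangianDev ν r c C (p.x (k + 1) ω) (θ k ω)
        - lagrangianDev ν r c C (p.x (k + 1) ω) (θ' k ω)) / (2 * K * w k ω) := by
  have hdev := measurable_lagrangianDev (ν := ν) (C := C) hrm hcm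
  let Ψ : ((Fin d → ℝ) × (Fin d → ℝ) × ℝ) × X → ℝ := fun q =>
    (lagrangianDev ν r c C q.2 q.1.1 - lagrangianDev ν r c C q.2 q.1.2.1) / (2 * K * q.1.2.2)
  have hΨ : Measurable Ψ := by
    have h₁ : Measurable fun q : ((Fin d → ℝ) × (Fin d → ℝ) × ℝ) × X => (q.2, q.1.1) := by fun_prop
    have h₂ : Measurable fun q : ((Fin d → ℝ) × (Fin d → ℝ) × ℝ) × X => (q.2, q.1.2.1) := by
      fun_prop
    have h₃ : Measurable fun q : ((Fin d → ℝ) × (Fin d → ℝ) × ℝ) × X => 2 * K * q.1.2.2 := by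
      fun_prop
    exact ((hdev.comp h₁).sub (hdev.comp h₂)).div h₃
  have hbdd k ω : |Ψ ((θ k ω, θ' k ω, w k ω), p.x (k + 1) ω)| ≤ 1 := by
    have hw0 : 0 ≤ 2 * K * w k ω := mul_nonneg (by positivity) ((l1norm_nonneg _).trans (hdist k ω))
    rw [abs_div, abs_of_nonneg hw0]
    exact div_le_one_of_le₀ ((abs_lagrangianDev_sub_le hr hC hrm hcm _ _ _).trans
      (mul_le_mul_of_nonneg_left (hdist k ω) (by positivity))) hw0
  have hpred k : Measurable[p.F k] fun ω => (θ k ω, θ' k ω, w k ω) :=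
    (hθ k).prodMk ((hθ' k).prodMk (hw k))
  have hmeas k : Measurable[p.F (k + 1)] fun ω => Ψ ((θ k ω, θ' k ω, w k ω), p.x (k + 1) ω) :=
    hΨ.comp (((hpred k).mono (p.F.mono k.le_succ) le_rfl).prodMk (p.x_adapted (k + 1)))
  refine ⟨fun k _ => hmeas k, fun k _ => .of_forall (hbdd k), fun k hk => ?_⟩
  refine condExp_comp_prodMk_eq_zero_of_indep (p.F.le k)
    ((p.x_adapted (k + 1)).mono (p.F.le _) le_rfl) (p.x_indep (k + 1) (by omega) hk) (hpred k) hΨ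
    (.of_bound ((hmeas k).mono (p.F.le _) le_rfl).aestronglyMeasurable 1 (.of_forall (hbdd k)))
    fun w' => ?_
  simp only [Ψ, p.x_law (k + 1) (by omega) hk, integral_div,
    integral_lagrangianDev_sub hr hC hrm hcm, zero_div]

end Protocol

/-! ### The bootstrap along one realization -/

/-- What a realization of Box B has to satisfy for its dual iterates to stay bounded: `v` and `v'`
are the optimistic and the true mean costs minus the constraint levels, `e` the estimation errors,
`g k` the Lagrangian deviation of round `k + 1`, `l` the comparator and `U` the confidence width.
The last two fields are the two concentration bounds along the surrogate iterates driven by `v'`. -/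
structure IsGoodPath {d : ℕ} (T : ℕ) (γ U : ℝ) (g : ℕ → (Fin d → ℝ) → ℝ) (v v' : ℕ → Fin d → ℝ)
    (e : ℕ → ℝ) (l : Fin d → ℝ) : Prop where
  lipschitz : ∀ k m m', |g k m - g k m'| ≤ 4 * l1norm (m - m')
  le_true : ∀ k < T, v k ≤ v' k
  true_le : ∀ k < T, ∀ i, v' k i ≤ v k i + 2 * e k
  abs_le_two : ∀ k < T, ∀ i, |v k i| ≤ 2
  err_mem : ∀ k, e k ∈ Set.Icc (0 : ℝ) 1
  sum_err_le : ∑ k ∈ range T, e k ≤ U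
  le_sq : 4 * d * T ≤ U ^ 2
  comparator_nonneg : 0 ≤ l
  optimism : ∀ k < T, ∑ i, v k i * (dualIterate γ v k i - l i)
    ≤ g k l - g k (dualIterate γ v k) + 2 * e k * (1 + ∑ i, l i)
  window : ∀ n < T, ∀ s < T, √d * ∑ k ∈ Ico s (n + 1), (g k l - g k (dualIterate γ v' k))
    / (4 * partialSups (fun j => l1norm (l - dualIterate γ v' j)) k) ≤ 3 / 4 * U
  grid : ∀ u w : Fin d → ℕ, (∀ i, u i ≤ 2 * T ^ 2) → (∀ i, w i ≤ 2 * T ^ 2) → ∀ n < T, ∀ s < T,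
    ∑ k ∈ Ico (s + 1) (n + 1), (g k (dualIterate γ v' k - gridPoint (γ / T) u)
        - g k (dualIterate γ v' k - gridPoint (γ / T) w))
      / (4 * l1norm (gridPoint (γ / T) u - gridPoint (γ / T) w)) ≤ 49 / 40 * U

namespace IsGoodPath

variable {d T : ℕ} {γ U : ℝ} {g : ℕ → (Fin d → ℝ) → ℝ} {v v' : ℕ → Fin d → ℝ} {e : ℕ → ℝ}
  {l : Fin d → ℝ} {n : ℕ}

theorem sum_err_le_of_le (h : IsGoodPath T γ U g v v' e l) (hn : n ≤ T) :
    ∑ k ∈ range n, e k ≤ U :=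
  (sum_le_sum_of_subset_of_nonneg (range_mono hn) fun k _ _ => (h.err_mem k).1).trans h.sum_err_le

theorem width_nonneg (h : IsGoodPath T γ U g v v' e l) : 0 ≤ U :=
  h.sum_err_le_of_le T.zero_le

theorem two_le_width (h : IsGoodPath T γ U g v v' e l) (hd : 0 < d) (hT : 0 < T) : 2 ≤ U := by
  have hdT : (1 : ℝ) ≤ d * T := by exact_mod_cast Nat.mul_pos hd hT
  nlinarith [h.le_sq, h.width_nonneg]

theorem mul_sub_div_cancel (h : IsGoodPath T γ U g v v' e l) (k : ℕ) {m m' : Fin d → ℝ} {w : ℝ}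
    (hw : l1norm (m - m') ≤ w) : 4 * w * ((g k m - g k m') / (4 * w)) = g k m - g k m' :=
  mul_div_cancel_of_imp' fun hw0 => abs_nonpos_iff.1 ((h.lipschitz k m m').trans (by linarith))

theorem surrogate_sub_mem_Icc (h : IsGoodPath T γ U g v v' e l) (hγ : 0 < γ) (hn : n ≤ T)
    (i : Fin d) : dualIterate γ v' n i - dualIterate γ v n i
      ∈ Set.Icc 0 (2 * γ * ∑ k ∈ range n, e k) :=
  ⟨sub_nonneg.2 (dualIterate_mono hγ.le (fun k hk => h.le_true k (hk.trans_le hn)) i),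
    dualIterate_sub_le hγ.le (fun k hk => h.le_true k (hk.trans_le hn))
      (fun k hk => h.true_le k (hk.trans_le hn)) i⟩

theorem sum_grid_sub_le (h : IsGoodPath T γ U g v v' e l) {u w : Fin d → ℕ}
    (hu : ∀ i, u i ≤ 2 * T ^ 2) (hw : ∀ i, w i ≤ 2 * T ^ 2) (hn : n < T) {s : ℕ} (hs : s < T) :
    ∑ k ∈ Ico (s + 1) (n + 1), (g k (dualIterate γ v' k - gridPoint (γ / T) u)
        - g k (dualIterate γ v' k - gridPoint (γ / T) w))
      ≤ 49 / 10 * U * l1norm (gridPoint (γ / T) u - gridPoint (γ / T) w) := by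
  set z := l1norm (gridPoint (γ / T) u - gridPoint (γ / T) w)
  have hz0 : 0 ≤ z := l1norm_nonneg _
  have hscale : ∀ k, g k (dualIterate γ v' k - gridPoint (γ / T) u)
      - g k (dualIterate γ v' k - gridPoint (γ / T) w)
      = 4 * z * ((g k (dualIterate γ v' k - gridPoint (γ / T) u)
        - g k (dualIterate γ v' k - gridPoint (γ / T) w)) / (4 * z)) := fun k =>
    (h.mul_sub_div_cancel k (by rw [sub_sub_sub_cancel_left, l1norm_sub_comm])).symm
  rw [sum_congr rfl fun k _ => hscale k, ← mul_sum]
  linarith [mul_le_mul_of_nonneg_left (h.grid u w hu hw n hn s hs) hz0]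

theorem surrogate_sub_le_grid (h : IsGoodPath T γ U g v v' e l) (hγ : 0 < γ) (hT : 0 < T)
    (hn : n ≤ T) (i : Fin d) :
    dualIterate γ v' n i - dualIterate γ v n i ≤ γ / T * ((2 * T ^ 2 : ℕ) : ℝ) := by
  have hT' : (0 : ℝ) < T := by exact_mod_cast hT
  have herr : ∑ k ∈ range n, e k ≤ T :=
    (sum_le_card_nsmul _ _ 1 fun k _ => (h.err_mem k).2).trans (by simpa using hn)
  calc dualIterate γ v' n i - dualIterate γ v n i ≤ 2 * γ * ∑ k ∈ range n, e k :=
        (h.surrogate_sub_mem_Icc hγ hn i).2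
    _ ≤ 2 * γ * T := by gcongr
    _ = γ / T * ((2 * T ^ 2 : ℕ) : ℝ) := by push_cast; field_simp [hT']

theorem sum_l1norm_surrogate_sub_le (h : IsGoodPath T γ U g v v' e l) (hγ : 0 < γ)
    (hn : n ≤ T) :
    ∑ k ∈ range n, l1norm ((dualIterate γ v' (k + 1) - dualIterate γ v (k + 1))
        - (dualIterate γ v' k - dualIterate γ v k)) ≤ d * (4 * γ * U) := by
  refine (sum_l1norm_dualIterate_sub_le hγ.le (fun k hk => h.le_true k (hk.trans_le hn))
    fun k hk => h.true_le k (hk.trans_le hn)).trans ?_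
  rw [Fintype.card_fin]
  gcongr
  exact h.sum_err_le_of_le hn

theorem sum_surrogate_sub_le (h : IsGoodPath T γ U g v v' e l) (hγ : 0 < γ) (hd : 0 < d)
    (hn : n < T) :
    ∑ k ∈ range (n + 1), (g k (dualIterate γ v' k) - g k (dualIterate γ v k))
      ≤ 47 / 2 * (d * γ * U ^ 2) := by
  have hT : (0 : ℝ) < T := by exact_mod_cast n.zero_le.trans_lt hn
  have hnT : ((n + 1 : ℕ) : ℝ) ≤ T := by exact_mod_cast hn
  have hU := h.width_nonneg
  have hU2 := h.two_le_width hd (n.zero_le.trans_lt hn)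
  have htransfer := sum_sub_le_of_grid (g := g) (m := dualIterate γ v') (K := 4)
    (D := fun k => dualIterate γ v' k - dualIterate γ v k) (η := γ / T) (N := 2 * T ^ 2)
    (z := 49 / 10 * U) (n := n + 1) h.lipschitz (by norm_num) (by positivity) (by positivity)
    (by simp [dualIterate_zero])
    (fun k hk i => (h.surrogate_sub_mem_Icc hγ (hk.trans hn) i).1)
    (fun k hk i => h.surrogate_sub_le_grid hγ (n.zero_le.trans_lt hn) (hk.trans hn) i)
    (fun u w hu hw s hs => h.sum_grid_sub_le hu hw hn (hs.trans_le hn))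
  simp only [sub_sub_cancel, Fintype.card_fin] at htransfer
  have hvar := h.sum_l1norm_surrogate_sub_le hγ hn
  have hmesh : ((n + 1 : ℕ) : ℝ) * (d * (γ / T)) ≤ d * γ :=
    calc ((n + 1 : ℕ) : ℝ) * (d * (γ / T)) ≤ T * (d * (γ / T)) := by gcongr
      _ = d * γ := by field_simp
  have hdγ : (0 : ℝ) ≤ d * γ := by positivity
  calc _ ≤ 49 / 10 * U * (d * (4 * γ * U) + d * γ) + 4 * (d * γ) := by
        refine htransfer.trans (add_le_add (by gcongr) ?_)
        linarith
    _ ≤ 47 / 2 * (d * γ * U ^ 2) := by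
        nlinarith [mul_nonneg hdγ (sub_nonneg.2 hU2), mul_nonneg (mul_nonneg hdγ hU)
          (sub_nonneg.2 hU2)]

theorem l1norm_sub_surrogate_le (h : IsGoodPath T γ U g v v' e l) (hγ : 0 < γ) (hn : n ≤ T)
    {M : ℝ} (hM : enorm (dualIterate γ v n - l) ≤ M) :
    l1norm (l - dualIterate γ v' n) ≤ √d * M + d * (2 * γ * U) := by
  have hgap : l1norm (dualIterate γ v' n - dualIterate γ v n) ≤ d * (2 * γ * U) := by
    have hcoord : ∀ i, |(dualIterate γ v' n - dualIterate γ v n) i| ≤ 2 * γ * U := fun i => by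
      have hmem := h.surrogate_sub_mem_Icc hγ hn i
      rw [Pi.sub_apply, abs_of_nonneg hmem.1]
      exact hmem.2.trans (by gcongr; exact h.sum_err_le_of_le hn)
    simpa using l1norm_le_of_forall_abs_le hcoord
  have hfar : l1norm (dualIterate γ v n - l) ≤ √d * M :=
    (l1norm_le_sqrt_mul_enorm _).trans (by gcongr)
  have hadd := l1norm_add_le (dualIterate γ v' n - dualIterate γ v n) (dualIterate γ v n - l)
  rw [sub_add_sub_cancel] at hadd
  rw [l1norm_sub_comm]
  linarith

theorem sum_sub_surrogate_le (h : IsGoodPath T γ U g v v' e l) (hγ : 0 < γ) (hd : 0 < d)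
    (hn : n < T) {M : ℝ} (hM : ∀ k ≤ n, enorm (dualIterate γ v k - l) ≤ M) :
    ∑ k ∈ range (n + 1), (g k l - g k (dualIterate γ v' k))
      ≤ (M + 2 * (γ * √d * U)) * (3 * U) := by
  have hU := h.width_nonneg
  have hsqrt : (0 : ℝ) < √d := Real.sqrt_pos.2 (by exact_mod_cast hd)
  set W := partialSups fun j => l1norm (l - dualIterate γ v' j)
  have hle : ∀ k, l1norm (l - dualIterate γ v' k) ≤ W k := le_partialSups _
  have hWn : W n ≤ √d * M + d * (2 * γ * U) := partialSups_le_iff.2 fun k hk =>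
    h.l1norm_sub_surrogate_le hγ (hk.trans hn.le) (hM k hk)
  have hparts := sum_mul_le_mul_of_tail_sum_le (n := n) (W := fun k => 4 * W k)
    (Z := fun k => (g k l - g k (dualIterate γ v' k)) / (4 * W k)) (z := 3 / 4 * U / √d)
    (fun j k hjk => mul_le_mul_of_nonneg_left (W.monotone hjk) (by norm_num))
    (mul_nonneg (by norm_num) ((l1norm_nonneg _).trans (hle 0)))
    (fun s hs => (le_div_iff₀' hsqrt).2 (h.window n hn s (hs.trans_lt hn)))
  calc _ = ∑ k ∈ range (n + 1), 4 * W k * ((g k l - g k (dualIterate γ v' k)) / (4 * W k)) :=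
        sum_congr rfl fun k _ => (h.mul_sub_div_cancel k (hle k)).symm
    _ ≤ 4 * W n * (3 / 4 * U / √d) := hparts
    _ ≤ 4 * (√d * M + d * (2 * γ * U)) * (3 / 4 * U / √d) := by gcongr
    _ = (M + 2 * (γ * √d * U)) * (3 * U) := by
        rw [← Real.mul_self_sqrt (Nat.cast_nonneg (α := ℝ) d)]
        field_simp
        rw [Real.sqrt_sq hsqrt.le]
        ring

theorem sq_enorm_dualIterate_sub_le (h : IsGoodPath T γ U g v v' e l) (hγ : 0 < γ) (hn : n ≤ T) :
    enorm (dualIterate γ v n - l) ^ 2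
      ≤ enorm l ^ 2 + 2 * γ * ∑ k ∈ range n, (g k l - g k (dualIterate γ v k))
        + 4 * (γ * U) * (1 + √d * enorm l) + (γ * U) ^ 2 := by
  have hl : ∑ i, l i ≤ √d * enorm l :=
    (sum_le_sum fun i _ => le_abs_self (l i)).trans (l1norm_le_sqrt_mul_enorm l)
  have hoptimism : ∑ k ∈ range n, ∑ i, v k i * (dualIterate γ v k i - l i)
      ≤ ∑ k ∈ range n, (g k l - g k (dualIterate γ v k)) + 2 * U * (1 + √d * enorm l) := by
    refine (sum_le_sum fun k hk => h.optimism k ((mem_range.1 hk).trans_le hn)).trans ?_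
    rw [sum_add_distrib, ← sum_mul, ← mul_sum]
    have hU := h.width_nonneg
    have hl0 : 0 ≤ ∑ i, l i := sum_nonneg fun i _ => h.comparator_nonneg i
    gcongr
    exact h.sum_err_le_of_le hn
  have hsq : ∑ k ∈ range n, ∑ i, v k i ^ 2 ≤ U ^ 2 := by
    have hv : ∀ k ∈ range n, ∑ i, v k i ^ 2 ≤ d * 4 := fun k hk => by
      have hle : ∀ i ∈ univ, v k i ^ 2 ≤ 4 := fun i _ => by
        have := sq_le_sq' (abs_le.1 (h.abs_le_two k ((mem_range.1 hk).trans_le hn) i)).1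
          (abs_le.1 (h.abs_le_two k ((mem_range.1 hk).trans_le hn) i)).2
        linarith
      simpa using sum_le_card_nsmul univ _ _ hle
    have hnT : (n : ℝ) ≤ T := by exact_mod_cast hn
    calc ∑ k ∈ range n, ∑ i, v k i ^ 2 ≤ n * (d * 4 : ℝ) := by
          simpa using sum_le_card_nsmul _ _ _ hv
      _ ≤ T * (d * 4) := by gcongr
      _ ≤ U ^ 2 := by linarith [h.le_sq]
  have hdescent := sum_sq_dualIterate_sub_le γ v h.comparator_nonneg n
  rw [sq_enorm, sq_enorm]
  calc _ ≤ _ := hdescent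
    _ ≤ ∑ i, l i ^ 2 + 2 * γ * (∑ k ∈ range n, (g k l - g k (dualIterate γ v k))
          + 2 * U * (1 + √d * enorm l)) + γ ^ 2 * U ^ 2 := by gcongr
    _ = _ := by ring

theorem enorm_dualIterate_sub_le (h : IsGoodPath T γ U g v v' e l) (hγ : 0 < γ) (hd : 0 < d)
    (hn : n ≤ T) :
    enorm (dualIterate γ v n - l) ≤ enorm l + 1 + 12 * (γ * √d * U) := by
  have hU := h.width_nonneg
  have hl := enorm_nonneg l
  have hsqrt : √(d : ℝ) ^ 2 = d := Real.sq_sqrt d.cast_nonneg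
  have hsqrt1 : 1 ≤ √(d : ℝ) := Real.one_le_sqrt.2 (by exact_mod_cast hd)
  induction n using Nat.strong_induction_on with
  | _ n ih =>
    rcases n with _ | n
    · have hzero : enorm (dualIterate γ v 0 - l) = enorm l := by simp [dualIterate_zero, enorm]
      have : 0 ≤ γ * √d * U := by positivity
      linarith
    have hdev := h.sum_sub_surrogate_le hγ hd hn fun k hk => ih k (by omega) (by omega)
    have hgap := h.sum_surrogate_sub_le hγ hd hn
    have hregret := h.sq_enorm_dualIterate_sub_le hγ hn
    have hsum := add_le_add hdev hgap
    rw [← sum_add_distrib] at hsum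
    simp only [sub_add_sub_cancel] at hsum
    set u := γ * √d * U with hu
    have hu0 : 0 ≤ u := by positivity
    have hγU : γ * U ≤ u := by rw [hu]; nlinarith [mul_nonneg hγ.le hU]
    refine (sq_le_sq₀ (enorm_nonneg _) (by positivity)).1 (hregret.trans ?_)
    have hγsum := mul_le_mul_of_nonneg_left hsum (mul_nonneg zero_le_two hγ.le)
    have hgap' : 2 * γ * (47 / 2 * (d * γ * U ^ 2)) = 47 * u ^ 2 := by
      rw [hu, mul_pow, mul_pow, hsqrt]; ring
    have hdev' : γ * U * (enorm l + 1 + 14 * u) ≤ u * (enorm l + 1 + 14 * u) := by gcongr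
    have hl' : γ * U * (√d * enorm l) = u * enorm l := by rw [hu]; ring
    have hsq : (γ * U) ^ 2 ≤ u ^ 2 := by gcongr
    nlinarith [hl']

theorem enorm_dualIterate_le (h : IsGoodPath T γ U g v v' e l) (hγ : 0 < γ) (hd : 0 < d)
    (hn : n ≤ T) : enorm (dualIterate γ v n) ≤ 1 + 2 * enorm l + 12 * (γ * √d * U) := by
  have hadd := enorm_add_le (dualIterate γ v n - l) l
  rw [sub_add_cancel] at hadd
  linarith [h.enorm_dualIterate_sub_le hγ hd hn]

theorem enorm_posPart_sum_le (h : IsGoodPath T γ U g v v' e l) (hγ : 0 < γ) (hd : 0 < d)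
    (hn : n ≤ T) {w : ℕ → Fin d → ℝ} (hw : ∀ i, ∑ k ∈ range n, (w k i - v' k i) ≤ 2 * U) :
    enorm (fun i => max (∑ k ∈ range n, w k i) 0)
      ≤ (1 + 3 * enorm l) / γ + 20 * √d * U := by
  have hU := h.width_nonneg
  have hle : (fun i => max (∑ k ∈ range n, w k i) 0)
      ≤ γ⁻¹ • dualIterate γ v n + fun _ => 4 * U := fun i => by
    have hiter : ∑ k ∈ range n, v k i ≤ γ⁻¹ * dualIterate γ v n i :=
      (le_inv_mul_iff₀ hγ).2 (mul_sum_le_dualIterate γ v n i)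
    have hest : ∑ k ∈ range n, v' k i ≤ ∑ k ∈ range n, v k i + 2 * U := by
      refine (sum_le_sum fun k hk => h.true_le k ((mem_range.1 hk).trans_le hn) i).trans ?_
      rw [sum_add_distrib, ← mul_sum]
      linarith [h.sum_err_le_of_le hn]
    have hwi := hw i
    rw [sum_sub_distrib] at hwi
    have hpos := mul_nonneg (inv_nonneg.2 hγ.le) (dualIterate_nonneg γ v n i)
    simp only [Pi.add_apply, Pi.smul_apply, smul_eq_mul]
    exact max_le (by linarith) (by linarith)
  calc enorm (fun i => max (∑ k ∈ range n, w k i) 0)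
      ≤ enorm (γ⁻¹ • dualIterate γ v n) + enorm fun _ : Fin d => 4 * U :=
        (enorm_mono (fun _ => le_max_right _ _) hle).trans (enorm_add_le _ _)
    _ = γ⁻¹ * enorm (dualIterate γ v n) + √d * (4 * U) := by
        rw [enorm_smul_of_nonneg (inv_nonneg.2 hγ.le), enorm_const (by positivity)]
    _ ≤ γ⁻¹ * (1 + 2 * enorm l + 12 * (γ * √d * U)) + √d * (4 * U) := by
        gcongr
        exact h.enorm_dualIterate_le hγ hd hn
    _ = (1 + 2 * enorm l) / γ + 16 * (√d * U) := by field_simp; ring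
    _ ≤ (1 + 3 * enorm l) / γ + 20 * √d * U := by
        have := enorm_nonneg l
        rw [mul_assoc]
        gcongr <;> norm_num

end IsGoodPath

/-! ### Optimism -/

namespace Protocol

variable {X : Type*} [MeasurableSpace X] {A : Type*} [MeasurableSpace A] {d : ℕ} {Ω : Type*}
  [MeasurableSpace Ω] {ν : Measure X} {P : Measure Ω} {r : X → A → ℝ} {c : X → A → Fin d → ℝ}
  {T : ℕ} {p : Protocol ν r c T P} {δ' : ℝ} {ω : Ω} {t : ℕ}

/-- The event of Assumption (EST): all estimates are within the error functions at confidence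
`δ'`. -/
def estEvent (p : Protocol ν r c T P) (δ' : ℝ) : Set Ω :=
  {ω | ∀ t ≤ T, ∀ x' a', |p.rhat t ω x' a' - r x' a'| ≤ p.eps t ω x' a' δ'
    ∧ ∀ i, |p.chat t ω x' a' i - c x' a' i| ≤ p.eps t ω x' a' δ'}

/-- The optimistic cost estimate at the context and action of round `k + 1`. -/
noncomputable def optCost (p : Protocol ν r c T P) (δ' : ℝ) (k : ℕ) (ω : Ω) : Fin d → ℝ :=
  p.clcb δ' k ω (p.x (k + 1) ω) (p.act (k + 1) ω)

/-- The estimation error at the context and action of round `k + 1`. -/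
def roundErr (p : Protocol ν r c T P) (δ' : ℝ) (k : ℕ) (ω : Ω) : ℝ :=
  p.eps k ω (p.x (k + 1) ω) (p.act (k + 1) ω) δ'

theorem clcb_mem_Icc (x : X) (a : A) (i : Fin d) : p.clcb δ' t ω x a i ∈ Set.Icc (-1 : ℝ) 1 :=
  ⟨le_min (le_max_right _ _) (by norm_num), min_le_right _ _⟩

theorem rucb_mem_Icc (hr : ∀ x a, r x a ∈ Set.Icc (0 : ℝ) 1) (hω : ω ∈ p.estEvent δ')
    (ht : t ≤ T) (x : X) (a : A) :
    p.rucb δ' t ω x a ∈ Set.Icc (r x a) (r x a + 2 * p.eps t ω x a δ') := by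
  have habs := abs_le.1 (hω t ht x a).1
  have heps := (p.eps_mem t ω x a δ').1
  exact ⟨le_min (le_max_of_le_left (by linarith [heps])) (hr x a).2,
    (min_le_left _ _).trans (max_le (by linarith) (by linarith [(hr x a).1]))⟩

theorem clcb_mem_Icc_of_mem_estEvent (hc : ∀ x a i, c x a i ∈ Set.Icc (-1 : ℝ) 1)
    (hω : ω ∈ p.estEvent δ') (ht : t ≤ T) (x : X) (a : A) (i : Fin d) :
    p.clcb δ' t ω x a i ∈ Set.Icc (c x a i - 2 * p.eps t ω x a δ') (c x a i) := by
  have habs := abs_le.1 ((hω t ht x a).2 i)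
  have heps := (p.eps_mem t ω x a δ').1
  exact ⟨le_min (le_max_of_le_left (by linarith [heps])) (by linarith [(hc x a i).2]),
    (min_le_left _ _).trans (max_le (by linarith) (hc x a i).1)⟩

theorem sum_roundErr (p : Protocol ν r c T P) (δ' : ℝ) (ω : Ω) :
    ∑ k ∈ range T, p.roundErr δ' k ω = p.beta δ' ω :=
  (sum_Icc_one_eq_sum_range
    (fun t => p.eps (t - 1) ω (p.x t ω) (p.act t ω) δ') T).symm

end Protocol

namespace BoxB

variable {X : Type*} [MeasurableSpace X] {A : Type*} [MeasurableSpace A] {d : ℕ} {Ω : Type*}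
  [MeasurableSpace Ω] {ν : Measure X} {P : Measure Ω} {r : X → A → ℝ} {c : X → A → Fin d → ℝ}
  {T : ℕ} {p : Protocol ν r c T P} {B : Fin d → ℝ} {γ δ' b : ℝ} {ω : Ω} {k : ℕ}

theorem lam_eq_dualIterate (box : BoxB p B γ δ' b) (hk : k ≤ T) :
    box.lam k ω = dualIterate γ (fun j i => p.optCost δ' j ω i - (B i - b)) k := by
  induction k with
  | zero => exact (funext (box.lam_zero ω)).trans (dualIterate_zero _ _).symm
  | succ k ih =>
    ext i
    rw [box.lam_update (k + 1) (by omega) hk ω i, Nat.add_sub_cancel, ih (by omega)]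
    rfl

variable [Fintype A] [Nonempty A]

theorem sum_mul_sub_le (box : BoxB p B γ δ' b) (hr : ∀ x a, r x a ∈ Set.Icc (0 : ℝ) 1)
    (hc : ∀ x a i, c x a i ∈ Set.Icc (-1 : ℝ) 1) (hω : ω ∈ p.estEvent δ') {l : Fin d → ℝ}
    (hl : 0 ≤ l) (hmin : ∀ l' : Fin d → ℝ, 0 ≤ l' →
      L ν r c l (fun i => B i - b) ≤ L ν r c l' (fun i => B i - b)) (hk : k < T) :
    ∑ i, (p.optCost δ' k ω i - (B i - b)) * (box.lam k ω i - l i)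
      ≤ lagrangianDev ν r c (fun i => B i - b) (p.x (k + 1) ω) l
        - lagrangianDev ν r c (fun i => B i - b) (p.x (k + 1) ω) (box.lam k ω)
        + 2 * p.roundErr δ' k ω * (1 + ∑ i, l i) := by
  have hlam : 0 ≤ box.lam k ω := by
    rw [box.lam_eq_dualIterate hk.le]
    exact dualIterate_nonneg _ _ _
  have hcost x a i := p.clcb_mem_Icc_of_mem_estEvent hc hω hk.le x a i
  have hrew x a := p.rucb_mem_Icc hr hω hk.le x a
  refine (sum_mul_sub_le_lagrangian_sub hlam hl (box.act_max (k + 1) (by omega) hk ω)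
    (fun a => (hrew _ a).1) (fun a i => (hcost _ a i).2) (hrew _ _).2
    fun i => sub_le_iff_le_add.1 (hcost _ _ i).1).trans ?_
  gcongr ?_ + _
  exact lagrangian_sub_le_lagrangianDev_sub (hmin _ hlam) _

end BoxB

/-! ### Concentration along the surrogate iterates -/

section ConfidenceLevels

variable {d T : ℕ} {δ : ℝ}

theorem exp_neg_log_four_mul_sq_div (hδ : 0 < δ) (hT : 0 < T) :
    Real.exp (-Real.log (4 * T ^ 2 / δ)) = δ / (4 * T ^ 2) := by
  rw [Real.exp_neg, Real.exp_log (by positivity), inv_div]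

theorem one_le_log_four_mul_sq_div (hδ : δ ∈ Set.Ioo (0 : ℝ) 1) (hT : 0 < T) :
    1 ≤ Real.log (4 * T ^ 2 / δ) := by
  have hT1 : (1 : ℝ) ≤ T := by exact_mod_cast hT
  rw [Real.le_log_iff_exp_le (div_pos (by positivity) hδ.1), le_div_iff₀ hδ.1]
  nlinarith [Real.exp_one_lt_three, Real.exp_pos 1, hδ.2]

theorem log_eight_mul_div_nonneg (hδ : δ ∈ Set.Ioo (0 : ℝ) 1) (hT : 0 < T) :
    0 ≤ Real.log (8 * (d + 1) * T / δ) := by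
  have hT1 : (1 : ℝ) ≤ T := by exact_mod_cast hT
  refine Real.log_nonneg ((one_le_div hδ.1).2 ?_)
  nlinarith [hδ.2, d.cast_nonneg (α := ℝ)]

theorem card_windows_mul_exp_le (hδ : 0 < δ) (hT : 0 < T) :
    (#(range T ×ˢ range T) : ℝ) * Real.exp (-Real.log (4 * T ^ 2 / δ)) ≤ δ / 4 := by
  have hT' : (0 : ℝ) < T := by exact_mod_cast hT
  rw [exp_neg_log_four_mul_sq_div hδ hT, card_product, card_range]
  push_cast
  field_simp [hT']
  exact le_rfl

theorem card_grid_mul_exp_le (hδ : δ ∈ Set.Ioo (0 : ℝ) 1) (hT : 0 < T) (hd : 0 < d) :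
    (#((Iic (fun _ : Fin d => 2 * T ^ 2) ×ˢ Iic (fun _ : Fin d => 2 * T ^ 2))
        ×ˢ range T ×ˢ range T) : ℝ)
      * Real.exp (-(3 * d * Real.log (4 * T ^ 2 / δ))) ≤ δ / 4 := by
  have hT1 : (1 : ℝ) ≤ T := by exact_mod_cast hT
  set q := δ / (4 * T ^ 2) with hq
  have hq0 : 0 ≤ q := by have := hδ.1; positivity
  have hqT : q * T ^ 2 = δ / 4 := by rw [hq]; field_simp
  have hexp : Real.exp (-(3 * d * Real.log (4 * T ^ 2 / δ))) = (q ^ 3) ^ d := by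
    rw [hq, ← exp_neg_log_four_mul_sq_div hδ.1 hT, ← Real.exp_nat_mul, ← Real.exp_nat_mul]
    push_cast
    ring_nf
  have hcell : (2 * T ^ 2 + 1) ^ 2 * q ^ 3 ≤ q :=
    calc (2 * T ^ 2 + 1) ^ 2 * q ^ 3 ≤ (4 * T ^ 2) ^ 2 * q ^ 3 := by gcongr; nlinarith
      _ = δ ^ 2 * q := by rw [pow_succ q 2, ← mul_assoc, ← mul_pow, hq]; field_simp
      _ ≤ q := mul_le_of_le_one_left hq0 (pow_le_one₀ hδ.1.le hδ.2.le)
  have hq1 : q ≤ 1 := by nlinarith [hδ.2]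
  rw [hexp]
  simp only [card_product, Pi.card_Iic, Nat.card_Iic, prod_const, card_univ, Fintype.card_fin,
    card_range]
  push_cast
  calc _ = ((2 * T ^ 2 + 1) ^ 2 * q ^ 3) ^ d * (T : ℝ) ^ 2 := by
        rw [mul_pow, ← pow_mul, ← pow_mul]
        ring
    _ ≤ q * (T : ℝ) ^ 2 := by
        gcongr
        exact (pow_le_pow_left₀ (by positivity) hcell d).trans (pow_le_of_le_one hq0 hq1 hd.ne')
    _ = δ / 4 := hqT

theorem card_coordinates_mul_exp_le (hδ : 0 < δ) (hT : 0 < T) :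
    (#((univ : Finset (Fin d)) ×ˢ range T) : ℝ)
      * Real.exp (-Real.log (8 * (d + 1) * T / δ)) ≤ δ / 4 := by
  have hT' : (0 : ℝ) < T := by exact_mod_cast hT
  rw [Real.exp_neg, Real.exp_log (by positivity), inv_div, card_product, card_range, card_univ,
    Fintype.card_fin]
  push_cast
  field_simp [hT']
  nlinarith [d.cast_nonneg (α := ℝ)]

end ConfidenceLevels

namespace Protocol

variable {X : Type*} [MeasurableSpace X] {A : Type*} [MeasurableSpace A]
  {d : ℕ} {Ω : Type*} [MeasurableSpace Ω] {ν : Measure X} {P : Measure Ω} {r : X → A → ℝ}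
  {c : X → A → Fin d → ℝ} {T : ℕ} {C l : Fin d → ℝ} {γ δ : ℝ}

theorem measure_cost_deviation_le [IsProbabilityMeasure P] (p : Protocol ν r c T P)
    (hc : ∀ x a i, c x a i ∈ Set.Icc (-1 : ℝ) 1) (hδ : δ ∈ Set.Ioo (0 : ℝ) 1) (hT : 0 < T) :
    P {ω | ∃ j ∈ (univ : Finset (Fin d)) ×ˢ range T, √(2 * T * Real.log (8 * (d + 1) * T / δ))
        < ∑ k ∈ Ico 0 (j.2 + 1), (p.cost (k + 1) ω j.1 - p.meanCost k ω j.1) / 2}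
      ≤ ENNReal.ofReal (δ / 4) :=
  (measure_exists_sqrt_lt_sum_Ico_le _
    (fun j _ => p.isBddMartingaleDiff_cost_sub_meanCost hc j.1)
    (fun _ hj => mem_range.1 (mem_product.1 hj).2) (log_eight_mul_div_nonneg hδ hT)).trans
    (ENNReal.ofReal_le_ofReal (card_coordinates_mul_exp_le hδ.1 hT))

variable [Fintype A] [Nonempty A]

/-- The increments of the comparator martingale, normalised by the running maximum of the distance
from the surrogate iterates to the comparator `l`. -/
noncomputable def comparatorIncr (p : Protocol ν r c T P) (C : Fin d → ℝ) (γ : ℝ) (l : Fin d → ℝ)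
    (k : ℕ) (ω : Ω) : ℝ :=
  (lagrangianDev ν r c C (p.x (k + 1) ω) l
      - lagrangianDev ν r c C (p.x (k + 1) ω) (p.surrogateDual C γ k ω))
    / (2 * 2 * partialSups (fun j => l1norm (l - p.surrogateDual C γ j ω)) k)

/-- The normalised increments of the martingale comparing two translates of the surrogate iterates
by grid points of mesh `γ / T`. -/
noncomputable def gridIncr (p : Protocol ν r c T P) (C : Fin d → ℝ) (γ : ℝ) (u v : Fin d → ℕ)
    (k : ℕ) (ω : Ω) : ℝ :=
  (lagrangianDev ν r c C (p.x (k + 1) ω) (p.surrogateDual C γ k ω - gridPoint (γ / T) u)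
      - lagrangianDev ν r c C (p.x (k + 1) ω) (p.surrogateDual C γ k ω - gridPoint (γ / T) v))
    / (2 * 2 * l1norm (gridPoint (γ / T) u - gridPoint (γ / T) v))

/-- The realizations along which the three families of martingales used in the analysis stay within
their Azuma–Hoeffding bounds, each family failing with probability at most `δ / 4`. -/
structure IsConcentrated (p : Protocol ν r c T P) (C : Fin d → ℝ) (γ δ : ℝ) (l : Fin d → ℝ)
    (ω : Ω) : Prop where
  comparator : ∀ n < T, ∀ s < T, ∑ k ∈ Ico s (n + 1), p.comparatorIncr C γ l k ω
    ≤ √(2 * T * Real.log (4 * T ^ 2 / δ))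
  grid : ∀ u v : Fin d → ℕ, (∀ i, u i ≤ 2 * T ^ 2) → (∀ i, v i ≤ 2 * T ^ 2) → ∀ n < T, ∀ s < T,
    ∑ k ∈ Ico (s + 1) (n + 1), p.gridIncr C γ u v k ω
      ≤ √(2 * T * (3 * d * Real.log (4 * T ^ 2 / δ)))
  cost : ∀ i, ∀ n < T, ∑ k ∈ range (n + 1), (p.cost (k + 1) ω i - p.meanCost k ω i) / 2
    ≤ √(2 * T * Real.log (8 * (d + 1) * T / δ))

variable [IsProbabilityMeasure ν] [IsProbabilityMeasure P]

theorem measure_comparator_deviation_le (p : Protocol ν r c T P)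
    (hr : ∀ x a, r x a ∈ Set.Icc (0 : ℝ) 1) (hC : ∀ x a i, |c x a i - C i| ≤ 2)
    (hrm : ∀ a, Measurable fun x => r x a) (hcm : ∀ a i, Measurable fun x => c x a i)
    (hδ : δ ∈ Set.Ioo (0 : ℝ) 1) (hT : 0 < T) :
    P {ω | ∃ j ∈ range T ×ˢ range T, √(2 * T * Real.log (4 * T ^ 2 / δ))
        < ∑ k ∈ Ico j.1 (j.2 + 1), p.comparatorIncr C γ l k ω} ≤ ENNReal.ofReal (δ / 4) := by
  have hdual := p.measurable_surrogateDual C γ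
  have hmart : IsBddMartingaleDiff P p.F T (p.comparatorIncr C γ l) :=
    p.isBddMartingaleDiff_lagrangianDev hr hC hrm hcm (fun _ => measurable_const) hdual
      (measurable_partialSups fun k => measurable_l1norm.comp ((hdual k).const_sub l))
      zero_le_two fun k ω => le_partialSups (fun j => l1norm (l - p.surrogateDual C γ j ω)) k
  exact (measure_exists_sqrt_lt_sum_Ico_le _ (fun _ _ => hmart)
    (fun _ hj => mem_range.1 (mem_product.1 hj).2)
    (zero_le_one.trans (one_le_log_four_mul_sq_div hδ hT))).trans
    (ENNReal.ofReal_le_ofReal (card_windows_mul_exp_le hδ.1 hT))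

theorem measure_grid_deviation_le (p : Protocol ν r c T P)
    (hr : ∀ x a, r x a ∈ Set.Icc (0 : ℝ) 1) (hC : ∀ x a i, |c x a i - C i| ≤ 2)
    (hrm : ∀ a, Measurable fun x => r x a) (hcm : ∀ a i, Measurable fun x => c x a i)
    (hδ : δ ∈ Set.Ioo (0 : ℝ) 1) (hT : 0 < T) (hd : 0 < d) :
    P {ω | ∃ j ∈ (Iic (fun _ : Fin d => 2 * T ^ 2) ×ˢ Iic (fun _ : Fin d => 2 * T ^ 2))
        ×ˢ range T ×ˢ range T, √(2 * T * (3 * d * Real.log (4 * T ^ 2 / δ)))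
        < ∑ k ∈ Ico (j.2.1 + 1) (j.2.2 + 1), p.gridIncr C γ j.1.1 j.1.2 k ω}
      ≤ ENNReal.ofReal (δ / 4) := by
  have hdual := p.measurable_surrogateDual C γ
  have hmart (u v : Fin d → ℕ) : IsBddMartingaleDiff P p.F T (p.gridIncr C γ u v) :=
    p.isBddMartingaleDiff_lagrangianDev hr hC hrm hcm (fun k => (hdual k).sub_const _)
      (fun k => (hdual k).sub_const _) (fun _ => measurable_const) zero_le_two fun k ω => by
        rw [sub_sub_sub_cancel_left, l1norm_sub_comm]
  have hlog := zero_le_one.trans (one_le_log_four_mul_sq_div hδ hT)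
  exact (measure_exists_sqrt_lt_sum_Ico_le _ (fun j _ => hmart j.1.1 j.1.2)
    (fun _ hj => mem_range.1 (mem_product.1 (mem_product.1 hj).2).2)
    (by positivity)).trans (ENNReal.ofReal_le_ofReal (card_grid_mul_exp_le hδ hT hd))

theorem measure_not_isConcentrated_le (p : Protocol ν r c T P)
    (hr : ∀ x a, r x a ∈ Set.Icc (0 : ℝ) 1) (hc : ∀ x a i, c x a i ∈ Set.Icc (-1 : ℝ) 1)
    (hC : ∀ x a i, |c x a i - C i| ≤ 2)
    (hrm : ∀ a, Measurable fun x => r x a) (hcm : ∀ a i, Measurable fun x => c x a i)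
    (hδ : δ ∈ Set.Ioo (0 : ℝ) 1) (hT : 0 < T) (hd : 0 < d) (γ : ℝ) (l : Fin d → ℝ) :
    P {ω | p.IsConcentrated C γ δ l ω}ᶜ ≤ ENNReal.ofReal (3 / 4 * δ) := by
  have hδ4 : 0 ≤ δ / 4 := by linarith [hδ.1]
  have hsum : ENNReal.ofReal (3 / 4 * δ)
      = ENNReal.ofReal (δ / 4) + ENNReal.ofReal (δ / 4) + ENNReal.ofReal (δ / 4) := by
    rw [← ENNReal.ofReal_add hδ4 hδ4, ← ENNReal.ofReal_add (by linarith) hδ4]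
    ring_nf
  rw [hsum]
  refine (measure_mono fun ω hω => ?_).trans <| (measure_union_le _ _).trans <| add_le_add
    ((measure_union_le _ _).trans <| add_le_add
      (p.measure_comparator_deviation_le (γ := γ) (l := l) hr hC hrm hcm hδ hT)
      (p.measure_grid_deviation_le (γ := γ) hr hC hrm hcm hδ hT hd))
    (p.measure_cost_deviation_le hc hδ hT)
  by_contra hout
  simp only [Set.mem_union, Set.mem_ofPred_eq, not_or, not_exists, not_and, not_lt, Prod.forall,
    mem_product, mem_range, mem_Iic, Pi.le_def, mem_univ, true_and] at hout
  obtain ⟨⟨hcomp, hgrid⟩, hcost⟩ := hout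
  exact hω ⟨fun n hn s hs => hcomp s n ⟨hs, hn⟩,
    fun u v hu hv n hn s hs => hgrid u v s n ⟨⟨hu, hv⟩, hs, hn⟩,
    fun i n hn => by simpa only [range_eq_Ico] using hcost i n hn⟩

end Protocol

section Width

variable {X : Type*} [MeasurableSpace X] {A : Type*} [MeasurableSpace A] {d : ℕ} {Ω : Type*}
  [MeasurableSpace Ω] {ν : Measure X} {P : Measure Ω} {r : X → A → ℝ} {c : X → A → Fin d → ℝ}
  {T : ℕ} {δ : ℝ}

theorem Protocol.beta_le_Upsilon (p : Protocol ν r c T P) (δ : ℝ) (ω : Ω) :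
    p.beta (δ / 4) ω ≤ p.Upsilon δ ω :=
  le_max_left _ _

theorem Protocol.two_mul_sqrt_le_Upsilon (p : Protocol ν r c T P) (δ : ℝ) (ω : Ω) :
    2 * √(d * T * Real.log (4 * T ^ 2 / δ)) ≤ p.Upsilon δ ω :=
  le_max_of_le_right (le_max_left _ _)

theorem Protocol.sqrt_le_Upsilon (p : Protocol ν r c T P) (δ : ℝ) (ω : Ω) :
    √(2 * T * Real.log (8 * (d + 1) * T / δ)) ≤ p.Upsilon δ ω :=
  le_max_of_le_right (le_max_right _ _)

theorem Protocol.four_mul_le_sq_Upsilon (p : Protocol ν r c T P) (hδ : δ ∈ Set.Ioo (0 : ℝ) 1)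
    (hT : 0 < T) (ω : Ω) : 4 * d * T ≤ p.Upsilon δ ω ^ 2 := by
  have hlog := one_le_log_four_mul_sq_div hδ hT
  calc (4 * d * T : ℝ) ≤ 4 * (d * T * Real.log (4 * T ^ 2 / δ)) := by
        rw [mul_assoc]
        exact mul_le_mul_of_nonneg_left (le_mul_of_one_le_right (by positivity) hlog) (by norm_num)
    _ = (2 * √(d * T * Real.log (4 * T ^ 2 / δ))) ^ 2 := by
        rw [mul_pow, Real.sq_sqrt (by positivity)]
        norm_num
    _ ≤ p.Upsilon δ ω ^ 2 := by
        gcongr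
        exact p.two_mul_sqrt_le_Upsilon δ ω

theorem Protocol.sqrt_mul_sqrt_le_Upsilon (p : Protocol ν r c T P) (ω : Ω) :
    √d * √(2 * T * Real.log (4 * T ^ 2 / δ)) ≤ 3 / 4 * p.Upsilon δ ω := by
  have hsqrt2 : √(2 : ℝ) ≤ 3 / 2 := (Real.sqrt_le_left (by norm_num)).2 (by norm_num)
  have heq : √(d : ℝ) * √(2 * T * Real.log (4 * T ^ 2 / δ))
      = √2 * √(d * T * Real.log (4 * T ^ 2 / δ)) := by
    rw [← Real.sqrt_mul d.cast_nonneg, ← Real.sqrt_mul zero_le_two]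
    ring_nf
  nlinarith [p.two_mul_sqrt_le_Upsilon δ ω, Real.sqrt_nonneg (d * T * Real.log (4 * T ^ 2 / δ))]

theorem Protocol.sqrt_grid_le_Upsilon (p : Protocol ν r c T P) (ω : Ω) :
    √(2 * T * (3 * d * Real.log (4 * T ^ 2 / δ))) ≤ 49 / 40 * p.Upsilon δ ω := by
  have hsqrt6 : √(6 : ℝ) ≤ 49 / 20 := (Real.sqrt_le_left (by norm_num)).2 (by norm_num)
  have heq : √(2 * T * (3 * d * Real.log (4 * T ^ 2 / δ)))
      = √6 * √(d * T * Real.log (4 * T ^ 2 / δ)) := by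
    rw [← Real.sqrt_mul (by norm_num)]
    ring_nf
  nlinarith [p.two_mul_sqrt_le_Upsilon δ ω, Real.sqrt_nonneg (d * T * Real.log (4 * T ^ 2 / δ))]

end Width

section Conclusion

variable {X : Type*} [MeasurableSpace X] {A : Type*} [Fintype A] [Nonempty A] [MeasurableSpace A]
  {d : ℕ} {Ω : Type*} [MeasurableSpace Ω] {ν : Measure X} {P : Measure Ω} {r : X → A → ℝ}
  {c : X → A → Fin d → ℝ} {T : ℕ} {p : Protocol ν r c T P} {B l : Fin d → ℝ} {γ δ b : ℝ} {ω : Ω}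

theorem Protocol.IsConcentrated.sum_cost_sub_meanCost_le {C : Fin d → ℝ}
    (hconc : p.IsConcentrated C γ δ l ω) {n : ℕ} (hn : n < T) (i : Fin d) :
    ∑ k ∈ range (n + 1), (p.cost (k + 1) ω i - p.meanCost k ω i) ≤ 2 * p.Upsilon δ ω := by
  have hcost := (hconc.cost i n hn).trans (p.sqrt_le_Upsilon δ ω)
  rw [← sum_div] at hcost
  linarith

variable [IsProbabilityMeasure ν]

theorem BoxB.isGoodPath (box : BoxB p B γ (δ / 4) b) (hT : 0 < T)
    (hr : ∀ x a, r x a ∈ Set.Icc (0 : ℝ) 1) (hc : ∀ x a i, c x a i ∈ Set.Icc (-1 : ℝ) 1)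
    (hrm : ∀ a, Measurable fun x => r x a) (hcm : ∀ a i, Measurable fun x => c x a i)
    (hC : ∀ i, |B i - b| ≤ 1) (hδ : δ ∈ Set.Ioo (0 : ℝ) 1) (hl : 0 ≤ l)
    (hmin : ∀ l' : Fin d → ℝ, 0 ≤ l' →
      L ν r c l (fun i => B i - b) ≤ L ν r c l' (fun i => B i - b))
    (hest : ω ∈ p.estEvent (δ / 4)) (hconc : p.IsConcentrated (fun i => B i - b) γ δ l ω)
    (hmean : ∀ k < T, ∀ i, p.meanCost k ω i = c (p.x (k + 1) ω) (p.act (k + 1) ω) i) :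
    IsGoodPath T γ (p.Upsilon δ ω)
      (fun k => lagrangianDev ν r c (fun i => B i - b) (p.x (k + 1) ω))
      (fun k i => p.optCost (δ / 4) k ω i - (B i - b)) (fun k i => p.meanCost k ω i - (B i - b))
      (fun k => p.roundErr (δ / 4) k ω) l := by
  have hdist {y : ℝ} (hy : y ∈ Set.Icc (-1 : ℝ) 1) (i : Fin d) : |y - (B i - b)| ≤ 2 := by
    have hCi := abs_le.1 (hC i)
    rw [abs_le]
    constructor <;> linarith [hy.1, hy.2]
  have hopt k (hk : k < T) i := p.clcb_mem_Icc_of_mem_estEvent hc hest hk.le (p.x (k + 1) ω)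
    (p.act (k + 1) ω) i
  have hfour : (2 * 2 : ℝ) = 4 := by norm_num
  refine ⟨fun k m m' => ?_, fun k hk i => ?_, fun k hk i => ?_, fun k _ i => ?_,
    fun k => p.eps_mem _ _ _ _ _, ?_, p.four_mul_le_sq_Upsilon hδ hT ω, hl, fun k hk => ?_,
    fun n hn s hs => ?_, fun u w hu hw n hn s hs => ?_⟩
  · rw [← hfour]
    exact abs_lagrangianDev_sub_le hr (fun x a i => hdist (hc x a i) i) hrm hcm _ m m'
  · exact sub_le_sub_right ((hopt k hk i).2.trans_eq (hmean k hk i).symm) _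
  · have hge := (hopt k hk i).1
    rw [← hmean k hk i] at hge
    simp only [Protocol.optCost, Protocol.roundErr]
    linarith
  · exact hdist (p.clcb_mem_Icc _ _ i) i
  · exact (p.sum_roundErr _ ω).trans_le (p.beta_le_Upsilon δ ω)
  · simpa only [box.lam_eq_dualIterate hk.le] using box.sum_mul_sub_le hr hc hest hl hmin hk
  · simp only [← hfour]
    exact (mul_le_mul_of_nonneg_left (hconc.comparator n hn s hs) (Real.sqrt_nonneg _)).trans
      ((p.sqrt_mul_sqrt_le_Upsilon ω).trans_eq (by norm_num))
  · rw [← hfour]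
    exact (hconc.grid u w hu hw n hn s hs).trans (p.sqrt_grid_le_Upsilon ω)

theorem BoxB.enorm_posPart_sum_cost_le (box : BoxB p B γ (δ / 4) b) (hd : 0 < d)
    (hr : ∀ x a, r x a ∈ Set.Icc (0 : ℝ) 1) (hc : ∀ x a i, c x a i ∈ Set.Icc (-1 : ℝ) 1)
    (hrm : ∀ a, Measurable fun x => r x a) (hcm : ∀ a i, Measurable fun x => c x a i)
    (hC : ∀ i, |B i - b| ≤ 1) (hδ : δ ∈ Set.Ioo (0 : ℝ) 1) (hγ : 0 < γ) (hl : 0 ≤ l)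
    (hmin : ∀ l' : Fin d → ℝ, 0 ≤ l' →
      L ν r c l (fun i => B i - b) ≤ L ν r c l' (fun i => B i - b))
    (hest : ω ∈ p.estEvent (δ / 4)) (hconc : p.IsConcentrated (fun i => B i - b) γ δ l ω)
    (hmean : ∀ k < T, ∀ i, p.meanCost k ω i = c (p.x (k + 1) ω) (p.act (k + 1) ω) i)
    {t : ℕ} (ht : t ∈ Icc 1 T) :
    enorm (fun i => max ((∑ τ ∈ Icc 1 t, p.cost τ ω i) - t * (B i - b)) 0)
      ≤ (1 + 3 * enorm l) / γ + 20 * √d * p.Upsilon δ ω := by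
  obtain ⟨ht1, htT⟩ := mem_Icc.1 ht
  obtain ⟨n, rfl⟩ := Nat.exists_eq_add_of_le' ht1
  have hpath := box.isGoodPath (ht1.trans htT) hr hc hrm hcm hC hδ hl hmin hest hconc hmean
  have hbound := hpath.enorm_posPart_sum_le hγ hd htT
    (w := fun k i => p.cost (k + 1) ω i - (B i - b)) fun i => by
      simpa only [sub_sub_sub_cancel_right] using hconc.sum_cost_sub_meanCost_le htT i
  simpa only [mul_sub, sum_sub_distrib, sum_const, card_range, nsmul_eq_mul,
    sum_Icc_one_eq_sum_range] using hbound

end Conclusion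

theorem lemma_one_general
    {X : Type*} [MeasurableSpace X] {A : Type*} [Fintype A] [Nonempty A] [MeasurableSpace A]
    {d : ℕ} {Ω : Type*} [MeasurableSpace Ω]
    (ν : Measure X) [IsProbabilityMeasure ν] (P : Measure Ω) [IsProbabilityMeasure P]
    (r : X → A → ℝ) (c : X → A → Fin d → ℝ) (T : ℕ) (hT : 1 ≤ T) (hd : 0 < d)
    (hr : ∀ x' a', r x' a' ∈ Set.Icc (0 : ℝ) 1)
    (hc : ∀ x' a' i, c x' a' i ∈ Set.Icc (-1 : ℝ) 1)
    (hrm : ∀ a', Measurable fun x' => r x' a')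
    (hcm : ∀ a' i, Measurable fun x' => c x' a' i)
    (B : Fin d → ℝ) (δ γ b : ℝ) (hC : ∀ i, |B i - b| ≤ 1)
    (hδ : δ ∈ Set.Ioo (0 : ℝ) 1) (hγ : 0 < γ)
    (p : Protocol ν r c T P) (box : BoxB p B γ (δ / 4) b)
    (lamstar : Fin d → ℝ) (hls0 : ∀ i, 0 ≤ lamstar i)
    (hmin : ∀ lam : Fin d → ℝ, (∀ i, 0 ≤ lam i) →
      L ν r c lamstar (fun i => B i - b) ≤ L ν r c lam (fun i => B i - b)) :
    ENNReal.ofReal (1 - δ) ≤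
      P {ω | ∀ t ∈ Finset.Icc 1 T,
        enorm (fun i => max ((∑ τ ∈ Finset.Icc 1 t, p.cost τ ω i) - t * (B i - b)) 0)
          ≤ (1 + 3 * enorm lamstar) / γ + 20 * Real.sqrt d * p.Upsilon δ ω} := by
  have hC2 (x' : X) (a' : A) (i : Fin d) : |c x' a' i - (B i - b)| ≤ 2 :=
    (abs_sub _ _).trans (by linarith [abs_le.2 (hc x' a' i), hC i])
  have hest : ENNReal.ofReal (1 - δ / 4) ≤ P (p.estEvent (δ / 4)) :=
    p.est (δ / 4) (by linarith [hδ.1]) (by linarith [hδ.2])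
  have hconc := p.measure_not_isConcentrated_le hr hc hC2 hrm hcm hδ hT hd γ lamstar
  calc ENNReal.ofReal (1 - δ) = ENNReal.ofReal (1 - δ / 4 - 3 / 4 * δ) := by ring_nf
    _ ≤ P (p.estEvent (δ / 4) ∩ {ω | p.IsConcentrated (fun i => B i - b) γ δ lamstar ω}) :=
        ofReal_sub_le_measure_inter (by linarith [hδ.1]) hest hconc
    _ ≤ _ := measure_mono_ae <| by
        filter_upwards [p.ae_meanCost_eq] with ω hmean ⟨hω, hω'⟩ t ht
        exact box.enorm_posPart_sum_cost_le hd hr hc hrm hcm hC hδ hγ hls0 hmin hω hω' hmean ht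

theorem abs_sub_le_one_of_lt_minComp {d : ℕ} {B : Fin d → ℝ} {b : ℝ}
    (hB : ∀ i, B i ∈ Set.Icc (0 : ℝ) 1) (hb0 : 0 < b)
    (hb : b < minComp B) (i : Fin d) : |B i - b| ≤ 1 := by
  have hle : minComp B ≤ B i := ciInf_le (Set.finite_range B).bddBelow i
  rw [abs_le]
  constructor <;> linarith [(hB i).2]

/-- Lemma 1 of the paper: with probability at least `1−δ`, the Box B strategy (run with
step size `γ`, confidence parameter `δ/4` and margin `b`) keeps the positive part of the
cost deviations controlled, for all `1 ≤ t ≤ T`: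
`‖(Σ_{τ≤t} c_τ − t(B−b·1))₊‖ ≤ (1 + 3‖λ*_{B−b·1}‖)/γ + 20√d·Υ_{T,δ}`. -/
theorem lemma_one
    {X : Type*} [MeasurableSpace X] {A : Type*} [Fintype A] [Nonempty A] [MeasurableSpace A]
    {d : ℕ} {Ω : Type*} [MeasurableSpace Ω]
    (ν : Measure X) [IsProbabilityMeasure ν] (P : Measure Ω) [IsProbabilityMeasure P]
    (r : X → A → ℝ) (c : X → A → Fin d → ℝ) (T : ℕ) (hT : 1 ≤ T) (hd : 0 < d)
    (hr : ∀ x' a', r x' a' ∈ Set.Icc (0 : ℝ) 1)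
    (hc : ∀ x' a' i, c x' a' i ∈ Set.Icc (-1 : ℝ) 1)
    (hrm : ∀ a', Measurable fun x' => r x' a')
    (hcm : ∀ a' i, Measurable fun x' => c x' a' i)
    (B : Fin d → ℝ) (hB : ∀ i, B i ∈ Set.Icc (0 : ℝ) 1)
    (δ γ b : ℝ) (hδ : δ ∈ Set.Ioo (0 : ℝ) 1) (hγ : 0 < γ)
    (hb0 : 0 < b) (hb : b < minComp B)
    (hfeas : ∃ B' : Fin d → ℝ, (∀ i, B' i < B i - b) ∧ Feasible ν c B')
    (p : Protocol ν r c T P) (box : BoxB p B γ (δ / 4) b)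
    (lamstar : Fin d → ℝ) (hls0 : ∀ i, 0 ≤ lamstar i)
    (hmin : ∀ lam : Fin d → ℝ, (∀ i, 0 ≤ lam i) →
      L ν r c lamstar (fun i => B i - b) ≤ L ν r c lam (fun i => B i - b)) :
    ENNReal.ofReal (1 - δ) ≤
      P {ω | ∀ t ∈ Finset.Icc 1 T,
        enorm (fun i => max ((∑ τ ∈ Finset.Icc 1 t, p.cost τ ω i) - t * (B i - b)) 0)
          ≤ (1 + 3 * enorm lamstar) / γ + 20 * Real.sqrt d * p.Upsilon δ ω} :=
  lemma_one_general ν P r c T hT hd hr hc hrm hcm B δ γ b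
    (abs_sub_le_one_of_lt_minComp hB hb0 hb) hδ hγ p box lamstar hls0 hmin

end CBwK
end

section
/- (Lemma 5 of the paper: a version of the Bernstein–Freedman inequality.) Let (X_τ)_{τ ≥ 1} be a martingale difference sequence with respect to a filtration (F_s)_{s ≥ 0}, with |X_τ| ≤ K almost surely for all τ. For t ≥ 1, let 𝔖_t = Σ_{τ=1}^t E[ X_τ² | F_{τ−1} ] denote the sum of conditional variances of the first t increments. Then for every δ ∈ (0,1) and every t ≥ 1, with probability at least 1−δ: Σ_{τ=1}^t X_τ ≤ √( 2 𝔖_t ln(t/δ) ) + 2K ln(t/δ). -/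
open MeasureTheory Finset

/-!
For `l ≥ 0` with `l K ≤ 1`, a bounded martingale difference sequence makes
`exp (l S_t - (l² / 2 + K l³ / 4) V_t)` a supermartingale, where `S_t` is the sum of the increments
and `V_t` the sum of their conditional variances. Markov's inequality then gives
`P (L ≤ l S_t - (l² / 2 + K l³ / 4) V_t) ≤ exp (-L)`, and the choice `l ≈ √(2 L / V_t)` would yield
the claim, except that `l` must not depend on the future.

It may however be random and `F 0`-measurable, as is the first conditional variance `v`. Since
`V_t` lies in `[v, v + (t - 1) K²]`, one of the `t` guesses `v + j K²`, `j < t`, approximates `V_t`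
closely enough from above, and a union bound over the corresponding rates costs the factor `t`.
Starting the grid at `v` rather than at `0` makes the guess exact for `t = 1`, where `L` may be
arbitrarily small; for `t ≥ 2` the bound is void unless `L > log 2`, and the mesh `K²` is then
less than the tolerated error `3 L K²`.
-/

section Rate

variable {K L V b l : ℝ}

/-- The bound for the conditional cumulant generating function at `l ∈ [0, 1 / K]` of a centred
variable bounded by `K`, per unit of conditional variance. The constant `1 / 4` exceeds the
coefficient `2 / 9` of the third-order Taylor remainder in `Real.exp_bound`. -/
noncomputable def cgfBound (K l : ℝ) : ℝ := l ^ 2 / 2 + K * l ^ 3 / 4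

lemma cgfBound_nonneg (hK : 0 ≤ K) (hl : 0 ≤ l) : 0 ≤ cgfBound K l := by
  unfold cgfBound; positivity

lemma continuous_cgfBound : Continuous (cgfBound K) := by
  unfold cgfBound; fun_prop

lemma abs_mul_le_one_of_abs_le {x : ℝ} (hl : 0 ≤ l) (hlK : l * K ≤ 1) (hx : |x| ≤ K) :
    |l * x| ≤ 1 := by
  rw [abs_mul, abs_of_nonneg hl]
  exact (mul_le_mul_of_nonneg_left hx hl).trans hlK

lemma exp_mul_le_add_cgfBound_mul_sq {x : ℝ} (hl : 0 ≤ l) (hlK : l * K ≤ 1) (hx : |x| ≤ K) :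
    Real.exp (l * x) ≤ 1 + l * x + cgfBound K l * x ^ 2 := by
  have taylor : Real.exp (l * x) ≤ 1 + l * x + (l * x) ^ 2 / 2 + |l * x| ^ 3 / 4 := by
    have hbound := (abs_le.1 (Real.exp_bound (abs_mul_le_one_of_abs_le hl hlK hx) three_pos)).2
    have hsum : ∑ m ∈ range 3, (l * x) ^ m / m.factorial = 1 + l * x + (l * x) ^ 2 / 2 := by
      simp [sum_range_succ]
    have hcoeff : ((3 : ℕ).succ : ℝ) / ((3 : ℕ).factorial * (3 : ℕ)) = 2 / 9 := by
      norm_num [Nat.factorial]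
    rw [hsum, hcoeff] at hbound
    have hcube : 0 ≤ |l * x| ^ 3 := by positivity
    linarith
  have remainder : |l * x| ^ 3 ≤ K * l ^ 3 * x ^ 2 := by
    calc |l * x| ^ 3 = |x| * (l ^ 3 * x ^ 2) := by
          rw [abs_mul, abs_of_nonneg hl, ← sq_abs x]; ring
      _ ≤ K * (l ^ 3 * x ^ 2) := by gcongr
      _ = K * l ^ 3 * x ^ 2 := by ring
  unfold cgfBound
  linarith

lemma cgfBound_mul_sq_le_one {x : ℝ} (hl : 0 ≤ l) (hlK : l * K ≤ 1) (hx : |x| ≤ K) :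
    cgfBound K l * x ^ 2 ≤ 1 := by
  have hsq : (l * x) ^ 2 ≤ 1 := (sq_le_one_iff_abs_le_one _).2 (abs_mul_le_one_of_abs_le hl hlK hx)
  calc cgfBound K l * x ^ 2 = (1 / 2 + l * K / 4) * (l * x) ^ 2 := by
        unfold cgfBound; ring
    _ ≤ 1 * 1 := by gcongr; linarith
    _ = 1 := one_mul 1

lemma add_cgfBound_mul_le (hK : 0 ≤ K) (hl : 0 ≤ l) (hV : 0 ≤ V) (hVL : l ^ 2 * V ≤ 2 * L)
    (hLV : 2 * L ≤ l ^ 2 * V + 3 * (l * K) * L) :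
    L + cgfBound K l * V ≤ l * (√(2 * V * L) + 2 * K * L) := by
  have hsqrt : l * V ≤ √(2 * V * L) := by
    apply Real.le_sqrt_of_sq_le
    calc (l * V) ^ 2 = l ^ 2 * V * V := by ring
      _ ≤ 2 * L * V := by gcongr
      _ = 2 * V * L := by ring
  calc L + cgfBound K l * V = L + l ^ 2 * V / 2 + l * K * (l ^ 2 * V) / 4 := by
        unfold cgfBound; ring
    _ ≤ L + l ^ 2 * V / 2 + l * K * (2 * L) / 4 := by gcongr
    _ ≤ l * (l * V) + 2 * (l * K) * L := by linarith
    _ ≤ l * √(2 * V * L) + 2 * (l * K) * L := by gcongr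
    _ = l * (√(2 * V * L) + 2 * K * L) := by ring

/-- The exponential rate `min (√(2 L / b)) (1 / K)` that is nearly optimal for the level `L` when
the conditional variances sum up to `b`, written so that `b = 0` gives `1 / K`. -/
noncomputable def bernsteinRate (K L b : ℝ) : ℝ := (max K √(b / (2 * L)))⁻¹

lemma measurable_bernsteinRate : Measurable (bernsteinRate K L) := by
  unfold bernsteinRate; fun_prop

lemma bernsteinRate_pos (hK : 0 < K) : 0 < bernsteinRate K L b :=
  inv_pos.2 (lt_max_of_lt_left hK)

lemma bernsteinRate_mul_le_one (hK : 0 < K) : bernsteinRate K L b * K ≤ 1 :=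
  (inv_mul_le_one₀ (lt_max_of_lt_left hK)).2 (le_max_left _ _)

lemma bernsteinRate_sq_mul_le (hK : 0 < K) (hL : 0 < L) :
    bernsteinRate K L b ^ 2 * b ≤ 2 * L := by
  have hm : 0 < max K √(b / (2 * L)) := lt_max_of_lt_left hK
  rw [bernsteinRate, inv_pow, inv_mul_le_iff₀ (by positivity), ← div_le_iff₀ (by positivity),
    ← Real.sqrt_le_left hm.le]
  exact le_max_right _ _

lemma bernsteinRate_mul_eq_one_or_sq_mul_eq (hK : 0 < K) (hL : 0 < L) (hb : 0 ≤ b) :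
    bernsteinRate K L b * K = 1 ∨ bernsteinRate K L b ^ 2 * b = 2 * L := by
  rcases le_total √(b / (2 * L)) K with h | h
  · left
    rw [bernsteinRate, max_eq_left h, inv_mul_cancel₀ hK.ne']
  · right
    have hb0 : b ≠ 0 := by
      rintro rfl
      simp only [zero_div, Real.sqrt_zero] at h
      exact hK.not_ge h
    rw [bernsteinRate, max_eq_right h, inv_pow, Real.sq_sqrt (by positivity)]
    field_simp

lemma le_bernsteinRate_mul_sub {S : ℝ} (hK : 0 < K) (hL : 0 < L) (hV : 0 ≤ V) (hVb : V ≤ b)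
    (hbV : b ≤ V + 3 * L * K ^ 2) (hS : √(2 * V * L) + 2 * K * L ≤ S) :
    L ≤ bernsteinRate K L b * S - cgfBound K (bernsteinRate K L b) * V := by
  have hb : 0 ≤ b := hV.trans hVb
  have hl : 0 < bernsteinRate K L b := bernsteinRate_pos hK
  have hlK : bernsteinRate K L b * K ≤ 1 := bernsteinRate_mul_le_one hK
  have hsq : bernsteinRate K L b ^ 2 * b ≤ 2 * L := bernsteinRate_sq_mul_le hK hL
  have hor := bernsteinRate_mul_eq_one_or_sq_mul_eq hK hL hb
  generalize bernsteinRate K L b = l at hl hlK hsq hor ⊢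
  have hVL : l ^ 2 * V ≤ 2 * L := le_trans (by gcongr) hsq
  have hLV : 2 * L ≤ l ^ 2 * V + 3 * (l * K) * L := by
    rcases hor with h | h
    · rw [h]
      have : 0 ≤ l ^ 2 * V := by positivity
      linarith
    · calc 2 * L = l ^ 2 * b := h.symm
        _ ≤ l ^ 2 * (V + 3 * L * K ^ 2) := by gcongr
        _ = l ^ 2 * V + 3 * (l * K) * L * (l * K) := by ring
        _ ≤ l ^ 2 * V + 3 * (l * K) * L := by
          have := mul_le_of_le_one_right (by positivity : 0 ≤ 3 * (l * K) * L) hlK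
          linarith
  have := add_cgfBound_mul_le hK.le hl.le hV hVL hLV
  have : l * (√(2 * V * L) + 2 * K * L) ≤ l * S := by gcongr
  linarith

end Rate

lemma sum_Icc_one_eq_sum_range {M : Type*} [AddCommMonoid M] (f : ℕ → M) (t : ℕ) :
    ∑ τ ∈ Icc 1 t, f τ = ∑ n ∈ range t, f (n + 1) := by
  rw [range_eq_Ico, sum_Ico_add']
  rfl

lemma exists_nat_mul_ge {c x ε : ℝ} {n : ℕ} (hc : 0 < c) (hx : 0 ≤ x) (hxn : x ≤ n * c)
    (hε : 0 ≤ ε) (hcε : n ≠ 0 → c ≤ ε) :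
    ∃ j ∈ range (n + 1), x ≤ j * c ∧ j * c ≤ x + ε := by
  have hceil : ⌈x / c⌉₊ ≤ n := Nat.ceil_le.2 ((div_le_iff₀ hc).2 hxn)
  refine ⟨⌈x / c⌉₊, mem_range_succ_iff.2 hceil, (div_le_iff₀ hc).1 (Nat.le_ceil _), ?_⟩
  rcases eq_or_ne n 0 with rfl | hn
  · rw [Nat.le_zero.1 hceil]
    push_cast
    linarith
  · have hlt : (⌈x / c⌉₊ : ℝ) < x / c + 1 := Nat.ceil_lt_add_one (by positivity)
    calc (⌈x / c⌉₊ : ℝ) * c ≤ (x / c + 1) * c := by gcongr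
      _ = x + c := by field_simp
      _ ≤ x + ε := by linarith [hcε hn]

lemma ofReal_one_sub_le_measure_of_compl_le {Ω : Type*} {m0 : MeasurableSpace Ω}
    {μ : Measure Ω} [IsProbabilityMeasure μ] {s : Set Ω} {δ : ℝ} (h : μ.real sᶜ ≤ δ) :
    ENNReal.ofReal (1 - δ) ≤ μ s := by
  refine ENNReal.ofReal_le_of_le_toReal ?_
  have hcover : μ.real (s ∪ sᶜ) ≤ μ.real s + μ.real sᶜ := measureReal_union_le s sᶜ
  rw [Set.union_compl_self, probReal_univ] at hcover
  change 1 - δ ≤ μ.real s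
  linarith

section CondExp

variable {Ω : Type*} {m m0 : MeasurableSpace Ω} {μ : Measure Ω} {X l : Ω → ℝ} {K : ℝ}

lemma condExp_sq_nonneg : ∀ᵐ ω ∂μ, 0 ≤ (μ[fun ω' => X ω' ^ 2 | m]) ω :=
  condExp_nonneg (.of_forall fun ω => sq_nonneg (X ω))

lemma condExp_sq_le_sq (hX : ∀ᵐ ω ∂μ, |X ω| ≤ K) :
    ∀ᵐ ω ∂μ, (μ[fun ω' => X ω' ^ 2 | m]) ω ≤ K ^ 2 := by
  have hsq : ∀ᵐ ω ∂μ, |X ω ^ 2| ≤ K ^ 2 := by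
    filter_upwards [hX] with ω hω
    rw [abs_pow]
    gcongr
  filter_upwards [ae_bdd_abs_condExp_of_ae_bdd_abs (m := m) hsq] with ω hω
  exact (le_abs_self _).trans hω

lemma integrable_exp_mul_of_abs_le [IsFiniteMeasure μ] (hXm : AEStronglyMeasurable X μ)
    (hX : ∀ᵐ ω ∂μ, |X ω| ≤ K) (hlm : AEStronglyMeasurable l μ)
    (hl : ∀ ω, 0 ≤ l ω) (hlK : ∀ ω, l ω * K ≤ 1) :
    Integrable (fun ω => Real.exp (l ω * X ω)) μ := by
  refine .of_bound (Real.continuous_exp.comp_aestronglyMeasurable (hlm.mul hXm)) (Real.exp 1) ?_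
  filter_upwards [hX] with ω hω
  rw [Real.norm_of_nonneg (Real.exp_pos _).le, Real.exp_le_exp]
  exact (abs_le.1 (abs_mul_le_one_of_abs_le (hl ω) (hlK ω) hω)).2

lemma condExp_exp_mul_le [IsFiniteMeasure μ] (hm : m ≤ m0) (hXm : AEStronglyMeasurable X μ)
    (hX : ∀ᵐ ω ∂μ, |X ω| ≤ K) (hX0 : μ[X | m] =ᵐ[μ] 0) (hlm : StronglyMeasurable[m] l)
    (hl : ∀ ω, 0 ≤ l ω) (hlK : ∀ ω, l ω * K ≤ 1) :
    μ[fun ω => Real.exp (l ω * X ω) | m] ≤ᵐ[μ]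
      fun ω => Real.exp (cgfBound K (l ω) * (μ[fun ω' => X ω' ^ 2 | m]) ω) := by
  have hgm : StronglyMeasurable[m] fun ω => cgfBound K (l ω) :=
    continuous_cgfBound.comp_stronglyMeasurable hlm
  have hXint : Integrable X μ := .of_bound hXm K hX
  have hX2int : Integrable (fun ω => X ω ^ 2) μ := by
    refine .of_bound (hXm.pow 2) (K ^ 2) (hX.mono fun ω hω => ?_)
    rw [norm_pow]
    gcongr
    exact hω
  have hlXint : Integrable (l * X) μ :=
    .of_bound ((hlm.mono hm).aestronglyMeasurable.mul hXm) 1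
      (hX.mono fun ω => abs_mul_le_one_of_abs_le (hl ω) (hlK ω))
  have hgX2int : Integrable ((fun ω => cgfBound K (l ω)) * fun ω => X ω ^ 2) μ := by
    refine .of_bound ((hgm.mono hm).aestronglyMeasurable.mul (hXm.pow 2)) 1 ?_
    filter_upwards [hX] with ω hω
    have hg : 0 ≤ cgfBound K (l ω) := cgfBound_nonneg ((abs_nonneg _).trans hω) (hl ω)
    rw [Pi.mul_apply, Real.norm_of_nonneg (mul_nonneg hg (sq_nonneg _))]
    exact cgfBound_mul_sq_le_one (hl ω) (hlK ω) hω
  have hmono := condExp_mono (m := m)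
    (integrable_exp_mul_of_abs_le hXm hX (hlm.mono hm).aestronglyMeasurable hl hlK)
    (((integrable_const 1).add hlXint).add hgX2int)
    (hX.mono fun ω => exp_mul_le_add_cgfBound_mul_sq (hl ω) (hlK ω))
  filter_upwards [hmono, hX0, condExp_add ((integrable_const 1).add hlXint) hgX2int m,
    condExp_add (integrable_const 1) hlXint m,
    condExp_mul_of_stronglyMeasurable_left hlm hlXint hXint,
    condExp_mul_of_stronglyMeasurable_left hgm hgX2int hX2int]
    with ω hω hω0 hadd hadd' hmul hmul'
  rw [hadd, Pi.add_apply, hadd', Pi.add_apply, hmul, hmul', condExp_const hm, Pi.mul_apply, hω0,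
    Pi.zero_apply, mul_zero, add_zero, Pi.mul_apply, add_comm] at hω
  exact hω.trans (Real.add_one_le_exp _)

end CondExp

section Martingale

variable {Ω : Type*} {m0 : MeasurableSpace Ω} {μ : Measure Ω} {F : Filtration ℕ m0}
  {Y : ℕ → Ω → ℝ} {K : ℝ} {l : Ω → ℝ}

/-- `Y` is a martingale difference sequence for `F` with increments bounded by `K`. The indexing is
shifted so as to avoid truncated subtraction: `Y n` is the increment from time `n` to `n + 1`. -/
structure IsBoundedMartingaleDiff (μ : Measure Ω) (F : Filtration ℕ m0) (Y : ℕ → Ω → ℝ) (K : ℝ) :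
    Prop where
  stronglyMeasurable : ∀ n, StronglyMeasurable[F (n + 1)] (Y n)
  condExp_eq_zero : ∀ n, μ[Y n | F n] =ᵐ[μ] 0
  abs_le : ∀ n, ∀ᵐ ω ∂μ, |Y n ω| ≤ K

/-- The sum of the conditional variances of the increments up to time `t`, which is `𝔖_t` in the
paper. -/
noncomputable def condVarSum (μ : Measure Ω) (F : Filtration ℕ m0) (Y : ℕ → Ω → ℝ) (t : ℕ)
    (ω : Ω) : ℝ :=
  ∑ n ∈ range t, (μ[fun ω' => Y n ω' ^ 2 | F n]) ω

/-- The logarithm of the exponential supermartingale with rate `l`. -/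
noncomputable def freedmanExponent (μ : Measure Ω) (F : Filtration ℕ m0) (Y : ℕ → Ω → ℝ) (K : ℝ)
    (l : Ω → ℝ) (t : ℕ) (ω : Ω) : ℝ :=
  l ω * ∑ n ∈ range t, Y n ω - cgfBound K (l ω) * condVarSum μ F Y t ω

lemma condVarSum_nonneg (t : ℕ) : ∀ᵐ ω ∂μ, 0 ≤ condVarSum μ F Y t ω := by
  filter_upwards [ae_all_iff.2 fun n => condExp_sq_nonneg (m := F n) (X := Y n)] with ω hω
  exact sum_nonneg fun n _ => hω n

lemma freedmanExponent_succ (n : ℕ) (ω : Ω) :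
    freedmanExponent μ F Y K l (n + 1) ω = freedmanExponent μ F Y K l n ω -
      cgfBound K (l ω) * (μ[fun ω' => Y n ω' ^ 2 | F n]) ω + l ω * Y n ω := by
  simp only [freedmanExponent, condVarSum, sum_range_succ]
  ring

lemma stronglyMeasurable_condVarSum (t : ℕ) :
    StronglyMeasurable[F (t - 1)] (condVarSum μ F Y t) :=
  Finset.stronglyMeasurable_fun_sum _ fun _ hn =>
    stronglyMeasurable_condExp.mono (F.mono (Nat.le_sub_one_of_lt (mem_range.1 hn)))

namespace IsBoundedMartingaleDiff

lemma nonneg [NeZero μ] (h : IsBoundedMartingaleDiff μ F Y K) : 0 ≤ K :=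
  have ⟨_, hω⟩ := (h.abs_le 0).exists
  (abs_nonneg _).trans hω

lemma condVarSum_succ_mem_Icc (h : IsBoundedMartingaleDiff μ F Y K) (n : ℕ) :
    ∀ᵐ ω ∂μ, condVarSum μ F Y (n + 1) ω ∈
      Set.Icc (condVarSum μ F Y 1 ω) (condVarSum μ F Y 1 ω + n * K ^ 2) := by
  filter_upwards [ae_all_iff.2 fun n => condExp_sq_nonneg (m := F n) (X := Y n),
    ae_all_iff.2 fun n => condExp_sq_le_sq (m := F n) (h.abs_le n)] with ω h0 hle
  have hsum : ∑ k ∈ range n, (μ[fun ω' => Y (k + 1) ω' ^ 2 | F (k + 1)]) ω ≤ n * K ^ 2 := by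
    simpa using sum_le_card_nsmul (range n) _ (K ^ 2) fun k _ => hle (k + 1)
  simp only [condVarSum, sum_range_succ' _ n, sum_range_one]
  constructor
  · exact le_add_of_nonneg_left (sum_nonneg fun k _ => h0 (k + 1))
  · linarith

lemma stronglyMeasurable_freedmanExponent (h : IsBoundedMartingaleDiff μ F Y K)
    (hlm : StronglyMeasurable[F 0] l) (t : ℕ) :
    StronglyMeasurable[F t] (freedmanExponent μ F Y K l t) := by
  have hlt : StronglyMeasurable[F t] l := hlm.mono (F.mono t.zero_le)
  have hsum : StronglyMeasurable[F t] fun ω => ∑ n ∈ range t, Y n ω :=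
    Finset.stronglyMeasurable_fun_sum _ fun n hn =>
      (h.stronglyMeasurable n).mono (F.mono (mem_range.1 hn))
  exact (hlt.mul hsum).sub
    ((continuous_cgfBound.comp_stronglyMeasurable hlt).mul
      ((stronglyMeasurable_condVarSum t).mono (F.mono (Nat.sub_le t 1))))

lemma freedmanExponent_le (h : IsBoundedMartingaleDiff μ F Y K) (hl : ∀ ω, 0 ≤ l ω)
    (hlK : ∀ ω, l ω * K ≤ 1) (t : ℕ) : ∀ᵐ ω ∂μ, freedmanExponent μ F Y K l t ω ≤ t := by
  filter_upwards [condVarSum_nonneg (F := F) (Y := Y) t, ae_all_iff.2 h.abs_le] with ω hV hY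
  have hK : 0 ≤ K := (abs_nonneg _).trans (hY 0)
  have hsum : ∑ n ∈ range t, l ω * Y n ω ≤ t := by
    simpa using sum_le_card_nsmul (range t) (fun n => l ω * Y n ω) 1 fun n _ =>
      (le_abs_self _).trans (abs_mul_le_one_of_abs_le (hl ω) (hlK ω) (hY n))
  rw [freedmanExponent, mul_sum]
  exact (sub_le_self _ (mul_nonneg (cgfBound_nonneg hK (hl ω)) hV)).trans hsum

lemma integrable_exp_freedmanExponent [IsFiniteMeasure μ]
    (h : IsBoundedMartingaleDiff μ F Y K) (hlm : StronglyMeasurable[F 0] l) (hl : ∀ ω, 0 ≤ l ω)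
    (hlK : ∀ ω, l ω * K ≤ 1) (t : ℕ) :
    Integrable (fun ω => Real.exp (freedmanExponent μ F Y K l t ω)) μ := by
  refine .of_bound (Real.continuous_exp.comp_stronglyMeasurable
    ((h.stronglyMeasurable_freedmanExponent hlm t).mono (F.le t))).aestronglyMeasurable
    (Real.exp t) ?_
  filter_upwards [h.freedmanExponent_le hl hlK t] with ω hω
  rwa [Real.norm_of_nonneg (Real.exp_pos _).le, Real.exp_le_exp]

lemma supermartingale_exp_freedmanExponent [IsFiniteMeasure μ]
    (h : IsBoundedMartingaleDiff μ F Y K) (hlm : StronglyMeasurable[F 0] l) (hl : ∀ ω, 0 ≤ l ω)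
    (hlK : ∀ ω, l ω * K ≤ 1) :
    Supermartingale (fun t ω => Real.exp (freedmanExponent μ F Y K l t ω)) F μ := by
  have hint := h.integrable_exp_freedmanExponent hlm hl hlK
  refine supermartingale_nat (fun t => Real.continuous_exp.comp_stronglyMeasurable
    (h.stronglyMeasurable_freedmanExponent hlm t)) hint fun n => ?_
  have hln : StronglyMeasurable[F n] l := hlm.mono (F.mono n.zero_le)
  have hYm : AEStronglyMeasurable (Y n) μ :=
    ((h.stronglyMeasurable n).mono (F.le _)).aestronglyMeasurable
  set v : Ω → ℝ := μ[fun ω => Y n ω ^ 2 | F n]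
  set A : Ω → ℝ := fun ω => Real.exp (freedmanExponent μ F Y K l n ω - cgfBound K (l ω) * v ω)
    with hA
  have hAm : StronglyMeasurable[F n] A := Real.continuous_exp.comp_stronglyMeasurable
    ((h.stronglyMeasurable_freedmanExponent hlm n).sub
      ((continuous_cgfBound.comp_stronglyMeasurable hln).mul stronglyMeasurable_condExp))
  have hfactor : (fun ω => Real.exp (freedmanExponent μ F Y K l (n + 1) ω)) =
      A * fun ω => Real.exp (l ω * Y n ω) := by
    funext ω
    rw [freedmanExponent_succ, Real.exp_add, Pi.mul_apply]
  have hAint : Integrable (A * fun ω => Real.exp (l ω * Y n ω)) μ := hfactor ▸ hint (n + 1)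
  rw [hfactor]
  filter_upwards [condExp_mul_of_stronglyMeasurable_left hAm hAint (integrable_exp_mul_of_abs_le
      hYm (h.abs_le n) (hln.mono (F.le n)).aestronglyMeasurable hl hlK),
    condExp_exp_mul_le (F.le n) hYm (h.abs_le n) (h.condExp_eq_zero n) hln hl hlK] with ω hpull hmgf
  rw [hpull, Pi.mul_apply]
  calc A ω * (μ[fun ω => Real.exp (l ω * Y n ω) | F n]) ω
      ≤ A ω * Real.exp (cgfBound K (l ω) * v ω) := by gcongr
    _ = Real.exp (freedmanExponent μ F Y K l n ω) := by
      rw [hA, ← Real.exp_add, sub_add_cancel]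

lemma measureReal_le_freedmanExponent_le [IsProbabilityMeasure μ]
    (h : IsBoundedMartingaleDiff μ F Y K) (hlm : StronglyMeasurable[F 0] l) (hl : ∀ ω, 0 ≤ l ω)
    (hlK : ∀ ω, l ω * K ≤ 1) (t : ℕ) (L : ℝ) :
    μ.real {ω | L ≤ freedmanExponent μ F Y K l t ω} ≤ Real.exp (-L) := by
  have hmgf : ProbabilityTheory.mgf (freedmanExponent μ F Y K l t) μ 1 ≤ 1 := by
    simpa [ProbabilityTheory.mgf, freedmanExponent, condVarSum] using
      (h.supermartingale_exp_freedmanExponent hlm hl hlK).setIntegral_le t.zero_le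
        MeasurableSet.univ
  calc μ.real {ω | L ≤ freedmanExponent μ F Y K l t ω}
      ≤ Real.exp (-1 * L) * ProbabilityTheory.mgf (freedmanExponent μ F Y K l t) μ 1 :=
        ProbabilityTheory.measure_ge_le_exp_mul_mgf L zero_le_one
          (by simpa only [one_mul] using h.integrable_exp_freedmanExponent hlm hl hlK t)
    _ ≤ Real.exp (-1 * L) * 1 := by gcongr
    _ = Real.exp (-L) := by rw [neg_one_mul, mul_one]

lemma exists_le_freedmanExponent (h : IsBoundedMartingaleDiff μ F Y K) (hK : 0 < K) {L : ℝ}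
    (hL : 0 < L) (n : ℕ) (hnL : n ≠ 0 → 1 ≤ 3 * L) :
    ∀ᵐ ω ∂μ, √(2 * condVarSum μ F Y (n + 1) ω * L) + 2 * K * L ≤ ∑ k ∈ range (n + 1), Y k ω →
      ∃ j ∈ range (n + 1), L ≤ freedmanExponent μ F Y K
        (fun ω => bernsteinRate K L (condVarSum μ F Y 1 ω + j * K ^ 2)) (n + 1) ω := by
  filter_upwards [condVarSum_nonneg (F := F) (Y := Y) (n + 1), h.condVarSum_succ_mem_Icc n]
    with ω hV hVmem hS
  obtain ⟨j, hj, hlo, hhi⟩ := exists_nat_mul_ge (pow_pos hK 2) (sub_nonneg.2 hVmem.1)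
    (sub_le_iff_le_add'.2 hVmem.2) (by positivity : 0 ≤ 3 * L * K ^ 2)
    fun hn => le_mul_of_one_le_left (sq_nonneg K) (hnL hn)
  exact ⟨j, hj, le_bernsteinRate_mul_sub hK hL hV (by linarith) (by linarith) hS⟩

lemma measureReal_lt_sum_le_of_pos [IsProbabilityMeasure μ]
    (h : IsBoundedMartingaleDiff μ F Y K) (hK : 0 < K) {L : ℝ} (hL : 0 < L) (n : ℕ)
    (hnL : n ≠ 0 → 1 ≤ 3 * L) :
    μ.real {ω | √(2 * condVarSum μ F Y (n + 1) ω * L) + 2 * K * L < ∑ k ∈ range (n + 1), Y k ω} ≤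
      (n + 1 : ℕ) * Real.exp (-L) := by
  set rate : ℕ → Ω → ℝ := fun j ω => bernsteinRate K L (condVarSum μ F Y 1 ω + j * K ^ 2)
  have hrate (j : ℕ) : StronglyMeasurable[F 0] (rate j) :=
    (measurable_bernsteinRate.comp
      ((stronglyMeasurable_condVarSum 1).measurable.add_const _)).stronglyMeasurable
  calc _ ≤ μ.real (⋃ j ∈ range (n + 1), {ω | L ≤ freedmanExponent μ F Y K (rate j) (n + 1) ω}) := by
        refine ENNReal.toReal_mono (measure_ne_top _ _) (measure_mono_ae ?_)
        filter_upwards [h.exists_le_freedmanExponent hK hL n hnL] with ω hω hS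
        obtain ⟨j, hj, hLj⟩ := hω (le_of_lt hS)
        exact Set.mem_biUnion (t := fun j => {ω | L ≤ freedmanExponent μ F Y K (rate j) (n + 1) ω})
          hj hLj
    _ ≤ ∑ j ∈ range (n + 1), μ.real {ω | L ≤ freedmanExponent μ F Y K (rate j) (n + 1) ω} :=
        measureReal_biUnion_finset_le _ _
    _ ≤ ∑ _j ∈ range (n + 1), Real.exp (-L) :=
        sum_le_sum fun j _ => h.measureReal_le_freedmanExponent_le (hrate j)
          (fun _ => (bernsteinRate_pos hK).le) (fun _ => bernsteinRate_mul_le_one hK) _ L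
    _ = (n + 1 : ℕ) * Real.exp (-L) := by
        rw [sum_const, card_range, nsmul_eq_mul]

theorem measureReal_lt_sum_le [IsProbabilityMeasure μ] (h : IsBoundedMartingaleDiff μ F Y K)
    {t : ℕ} (ht : 1 ≤ t) (L : ℝ) :
    μ.real {ω | √(2 * condVarSum μ F Y t ω * L) + 2 * K * L < ∑ n ∈ range t, Y n ω} ≤
      t * Real.exp (-L) := by
  rcases le_or_gt 1 (t * Real.exp (-L)) with hvoid | htL
  · exact measureReal_le_one.trans hvoid
  have hlog : Real.log t < L := by
    rw [Real.log_lt_iff_lt_exp (by positivity)]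
    rwa [Real.exp_neg, ← div_eq_mul_inv, div_lt_one (Real.exp_pos L)] at htL
  rcases h.nonneg.eq_or_lt with rfl | hK
  · have hnull : μ.real {ω | √(2 * condVarSum μ F Y t ω * L) + 2 * 0 * L < ∑ n ∈ range t, Y n ω} =
        0 := by
      refine (measureReal_eq_zero_iff (measure_ne_top _ _)).2 (measure_eq_zero_iff_ae_notMem.2 ?_)
      filter_upwards [ae_all_iff.2 h.abs_le] with ω hω
      simp [abs_nonpos_iff.1 (hω _)]
    rw [hnull]
    positivity
  · obtain ⟨n, rfl⟩ := Nat.exists_eq_add_of_le' ht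
    refine h.measureReal_lt_sum_le_of_pos hK ((Real.log_natCast_nonneg _).trans_lt hlog) n
      fun hn => ?_
    have hlog2 : Real.log 2 ≤ Real.log (n + 1 : ℕ) :=
      Real.log_le_log two_pos (by exact_mod_cast Nat.succ_le_succ (Nat.pos_of_ne_zero hn))
    linarith [Real.log_two_gt_d9]

end IsBoundedMartingaleDiff

end Martingale

/-- A version of the Bernstein–Freedman inequality (Lemma 5 of the paper): for a martingale
difference sequence `(X_τ)` with increments bounded by `K`, for every `δ ∈ (0,1)` and
`t ≥ 1`, with probability at least `1−δ`,
`Σ_{τ=1}^t X_τ ≤ √(2 𝔖_t ln(t/δ)) + 2K ln(t/δ)`, where `𝔖_t` is the (random) sum of the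
conditional variances of the first `t` increments. -/
theorem bernstein_freedman
    {Ω : Type*} {m0 : MeasurableSpace Ω} (P : Measure Ω) [IsProbabilityMeasure P]
    (F : Filtration ℕ m0) (Xs : ℕ → Ω → ℝ) (K : ℝ)
    (hadapted : ∀ τ, 1 ≤ τ → StronglyMeasurable[F τ] (Xs τ))
    (hint : ∀ τ, 1 ≤ τ → Integrable (Xs τ) P)
    (hmds : ∀ τ, 1 ≤ τ → P[Xs τ | F (τ - 1)] =ᵐ[P] 0)
    (hbdd : ∀ τ, 1 ≤ τ → ∀ᵐ ω ∂P, |Xs τ ω| ≤ K)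
    (δ : ℝ) (hδ : δ ∈ Set.Ioo (0 : ℝ) 1) (t : ℕ) (ht : 1 ≤ t) :
    ENNReal.ofReal (1 - δ) ≤
      P {ω | ∑ τ ∈ Finset.Icc 1 t, Xs τ ω ≤
          Real.sqrt (2 * (∑ τ ∈ Finset.Icc 1 t,
              (P[fun ω' => (Xs τ ω') ^ 2 | F (τ - 1)]) ω) * Real.log (t / δ))
            + 2 * K * Real.log (t / δ)} := by
  have hX : IsBoundedMartingaleDiff P F (fun n => Xs (n + 1)) K :=
    ⟨fun n => hadapted _ n.succ_pos, fun n => hmds _ n.succ_pos, fun n => hbdd _ n.succ_pos⟩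
  have hδt : t * Real.exp (-Real.log (t / δ)) = δ := by
    have hδ0 : 0 < δ := hδ.1
    rw [Real.exp_neg, Real.exp_log (by positivity)]
    field_simp
  refine ofReal_one_sub_le_measure_of_compl_le ?_
  simp only [Set.compl_ofPred, not_le, sum_Icc_one_eq_sum_range]
  exact (hX.measureReal_lt_sum_le ht _).trans_eq hδt
end
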